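/- arXiv:1509.01376 — 2 statements merged into one kernel-verified Lean document; each statement's English description precedes it below -/
import Mathlib

section
/- Let n ≥ 1 and let w ∈ U(n) ∗ F₁ be a one-variable word with coefficients in the unitary group U(n) whose content ε(w) ∈ F₁ ≅ ℤ is nonzero. Then there exists u ∈ U(n) such that the evaluation homomorphism U(n) ∗ F₁ → U(n) (identity on U(n), x₁ ↦ u) sends w to the identity matrix; i.e., every non-singular one-variable equation with coefficients in U(n) can be solved in U(n). -/
/-!
Deform the word map `u ↦ w(u)` of the unitary group `U` of a finite-dimensional C⋆-algebra, through
smooth self-maps of `U`, to the power map `u ↦ u ^ k`, `k ≠ 0`, by moving the coefficients of `w`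
along paths to `1`. A map homotopic to a nontrivial power map hits `1` because its degree is
nonzero, and this is seen with differential forms. Given a homotopy `F` and a bump function `φ`
around `1`, consider

`∫ φ (F t u) * det (right logarithmic derivative of F t at u)`

over `U` with Haar measure. Its derivative in `t` vanishes by Stokes' theorem: the pullback by `F`
of a top-degree form on `U` is closed, and the integrals of derivatives along right-invariant fields
vanish by invariance of Haar measure. For `F t u = u ^ k` with `k > 0` (the case `k < 0` follows by
inversion) the determinant is that of `∑ i < k, Ad u ^ i`, which is nonnegative because `Ad u` is a
contraction and positive at `u = 1`, so the integral is positive. If `F 1` omitted `1`, a `φ` of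
small support would make it zero.
-/

open MeasureTheory Set Filter Topology Module

local notation "𝔲(" A ")" => skewAdjoint.submodule ℝ A

section Alternating

variable {K V W : Type*} [Field K] [AddCommGroup V] [Module K V] [AddCommGroup W] [Module K W]

theorem alternatingMap_vecCons_eq_zero_of_mem_span {n : ℕ} (f : V [⋀^Fin (n + 1)]→ₗ[K] W)
    {x : V} {v : Fin n → V} (hx : x ∈ Submodule.span K (range v)) :
    f (Matrix.vecCons x v) = 0 :=
  f.map_linearDependent _ fun h => (linearIndependent_finCons.1 h).2 hx

theorem alternatingMap_eq_zero_of_finrank_lt {ι : Type*} [Fintype ι] (f : V [⋀^ι]→ₗ[K] W)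
    {S : Submodule K V} [FiniteDimensional K S] (hS : finrank K S < Fintype.card ι) {v : ι → V}
    (hv : ∀ i, v i ∈ S) : f v = 0 :=
  f.map_linearDependent _ fun h =>
    (LinearIndependent.of_comp S.subtype (v := fun i => (⟨v i, hv i⟩ : S)) h
      ).fintype_card_le_finrank.not_gt hS

end Alternating

section Det

variable {V : Type*} [NormedAddCommGroup V] [NormedSpace ℝ V] [FiniteDimensional ℝ V]

theorem det_one_sub_pos_of_norm_lt_one {S : V →L[ℝ] V} (hS : ‖S‖ < 1) : 0 < (1 - S).det := by
  have : CompleteSpace V := FiniteDimensional.complete ℝ V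
  have hcont : Continuous fun s : ℝ => (1 - s • S).det :=
    ContinuousLinearMap.continuous_det.comp (by fun_prop)
  by_contra! hneg
  obtain ⟨s, ⟨hs₀, hs₁⟩, hdet⟩ : (0 : ℝ) ∈ (fun s : ℝ => (1 - s • S).det) '' Icc 0 1 :=
    intermediate_value_Icc' zero_le_one hcont.continuousOn
      ⟨by simpa using hneg, by simp [ContinuousLinearMap.det]⟩
  have hunit : IsUnit (1 - s • S) := by
    refine isUnit_one_sub_of_norm_lt_one (lt_of_le_of_lt ?_ hS)
    rw [norm_smul, Real.norm_of_nonneg hs₀]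
    exact mul_le_of_le_one_left (norm_nonneg S) hs₁
  exact (LinearMap.isUnit_det _ (hunit.map ContinuousLinearMap.toLinearMapRingHom)).ne_zero hdet

theorem det_geom_sum_nonneg_of_norm_le_one {R : V →L[ℝ] V} (hR : ‖R‖ ≤ 1) (k : ℕ) :
    0 ≤ (∑ i ∈ Finset.range k, R ^ i).det := by
  have hcont : Continuous fun s : ℝ => (∑ i ∈ Finset.range k, (s • R) ^ i).det :=
    ContinuousLinearMap.continuous_det.comp (by fun_prop)
  have hlim := (hcont.tendsto 1).mono_left (nhdsWithin_le_nhds (s := Iio 1))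
  simp only [one_smul] at hlim
  refine ge_of_tendsto hlim ?_
  filter_upwards [Ioo_mem_nhdsLT zero_lt_one] with s hs
  rcases k.eq_zero_or_pos with rfl | hk
  · simp [ContinuousLinearMap.det, LinearMap.det_zero]
  have hnorm : ‖s • R‖ < 1 := by
    rw [norm_smul, Real.norm_of_nonneg hs.1.le]
    exact (mul_le_of_le_one_right hs.1.le hR).trans_lt hs.2
  have hgeom : (∑ i ∈ Finset.range k, (s • R) ^ i).det * (1 - s • R).det
      = (1 - (s • R) ^ k).det := by
    rw [← geom_sum_mul_neg]
    exact (LinearMap.det_comp _ _).symm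
  have hpow : ‖(s • R) ^ k‖ < 1 :=
    (norm_pow_le' _ hk).trans_lt (pow_lt_one₀ (norm_nonneg _) hnorm hk.ne')
  exact (pos_of_mul_pos_left (hgeom ▸ det_one_sub_pos_of_norm_lt_one hpow)
    (det_one_sub_pos_of_norm_lt_one hnorm).le).le

end Det

section Trace

open scoped ComplexOrder

theorem trace_pos_of_spectrum_nonneg {V : Type*} [AddCommGroup V] [Module ℂ V]
    [FiniteDimensional ℂ V] {f : End ℂ V} (hf : ∀ z ∈ spectrum ℂ f, 0 ≤ z) {z : ℂ}
    (hz : z ∈ spectrum ℂ f) (hz₀ : z ≠ 0) : 0 < LinearMap.trace ℂ V f := by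
  simp only [End.mem_spectrum_iff_isRoot_charpoly] at hf hz
  have hroots {y : ℂ} : y ∈ f.charpoly.roots ↔ f.charpoly.IsRoot y :=
    Polynomial.mem_roots f.charpoly_monic.ne_zero
  rw [End.trace_eq_sum_roots_charpoly_of_splits (IsAlgClosed.splits _)]
  exact ((hf z hz).lt_of_ne' hz₀).trans_le
    (Multiset.single_le_sum (fun y hy => hf y (hroots.1 hy)) z (hroots.2 hz))

theorem spectrum_lmul {K A : Type*} [Field K] [Ring A] [Algebra K A] (a : A) :
    spectrum K (Algebra.lmul K A a) = spectrum K a := by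
  ext z
  rw [spectrum.mem_iff, spectrum.mem_iff, ← AlgHom.commutes (Algebra.lmul K A), ← map_sub]
  exact Algebra.lmul_isUnit_iff.not

variable {A : Type*} [CStarAlgebra A] [FiniteDimensional ℂ A]

theorem finite_spectrum_of_finiteDimensional (a : A) : (spectrum ℂ a).Finite :=
  spectrum_lmul (K := ℂ) a ▸ End.finite_spectrum _

theorem trace_lmul_star_mul_self_pos {a : A} (ha : a ≠ 0) :
    0 < LinearMap.trace ℂ A (Algebra.lmul ℂ A (star a * a)) := by
  let _ : PartialOrder A := CStarAlgebra.spectralOrder A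
  have : StarOrderedRing A := CStarAlgebra.spectralOrderedRing A
  have : Nontrivial A := nontrivial_of_ne a 0 ha
  have hspec : algebraMap ℝ ℂ '' spectrum ℝ (star a * a) =
      spectrum ℂ (Algebra.lmul ℂ A (star a * a)) := by
    rw [spectrum_lmul, (IsSelfAdjoint.star_mul_self a).spectrumRestricts.algebraMap_image]
  refine trace_pos_of_spectrum_nonneg (z := algebraMap ℝ ℂ ‖star a * a‖) ?_ ?_ ?_
  · rw [← hspec]
    rintro _ ⟨y, hy, rfl⟩
    exact Complex.zero_le_real.2 (spectrum_star_mul_self_nonneg y hy)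
  · rw [← hspec]
    exact mem_image_of_mem _ (CStarAlgebra.norm_mem_spectrum_of_nonneg (star_mul_self_nonneg a))
  · simpa [CStarRing.norm_star_mul_self] using ha

end Trace

theorem basis_mem_span_image_compl {K V ι : Type*} [Field K] [AddCommGroup V] [Module K V]
    {B : LinearMap.BilinForm K V} (b : Basis ι K V) (hb : B.IsOrthoᵢ b)
    {s : Set ι} {x : V} (hs : ∀ i ∈ s, B (b i) (b i) ≠ 0) (hx : ∀ i ∈ s, B x (b i) = 0) :
    x ∈ Submodule.span K (b '' sᶜ) := by
  have hcoord (i : ι) : B.flip (b i) = B (b i) (b i) • b.coord i := b.ext fun j => by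
    rcases eq_or_ne j i with rfl | hji
    · simp
    · simpa [hji] using hb hji
  refine b.mem_span_image.2 fun i hi his => Finsupp.mem_support_iff.1 hi ?_
  have h := LinearMap.congr_fun (hcoord i) x
  simpa [hs i his, hx i his] using h

section UnimodularFrame

/-- A family `X` of vectors in an associative algebra is a unimodular frame if no bracket
`⁅X i, X j⁆` involves `X i` or `X j`: a convenient strengthening of the vanishing of the trace of
the adjoint representation. -/
def IsUnimodularFrame {ι A : Type*} [Ring A] [Module ℝ A] (X : ι → A) : Prop :=
  ∀ i j, ⁅X i, X j⁆ ∈ Submodule.span ℝ (X '' {i, j}ᶜ)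

variable (A : Type*) [CStarAlgebra A]

/-- The trace form `(x, y) ↦ Re tr (a ↦ x * y * a)` on the Lie algebra of the unitary group of `A`.
It is ad-invariant and negative definite, so its orthogonal bases are unimodular frames. -/
noncomputable def skewTraceForm : LinearMap.BilinForm ℝ 𝔲(A) :=
  ((LinearMap.mul ℂ A).compr₂ (LinearMap.trace ℂ A ∘ₗ (Algebra.lmul ℂ A).toLinearMap)
    |>.restrictScalars₁₂ ℝ ℝ |>.compr₂ Complex.reLm).domRestrict₁₂ 𝔲(A) 𝔲(A)

variable {A}

theorem skewTraceForm_apply (x y : 𝔲(A)) :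
    skewTraceForm A x y = (LinearMap.trace ℂ A (Algebra.lmul ℂ A ((x : A) * y))).re := rfl

theorem skewTraceForm_isSymm : LinearMap.IsSymm (skewTraceForm A) where
  eq x y := by
    rw [RingHom.id_apply, skewTraceForm_apply, skewTraceForm_apply, map_mul,
      LinearMap.trace_mul_comm, ← map_mul]

theorem skewTraceForm_self_ne_zero [FiniteDimensional ℂ A] {x : 𝔲(A)} (hx : x ≠ 0) :
    skewTraceForm A x x ≠ 0 := by
  have hpos := trace_lmul_star_mul_self_pos (a := (x : A)) (by simpa using hx)
  rw [skewAdjoint.mem_iff.1 x.2, neg_mul, map_neg, map_neg] at hpos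
  exact (neg_pos.1 hpos.1).ne

theorem skewTraceForm_lie_left {x y c : 𝔲(A)} (hc : (c : A) = ⁅(x : A), (y : A)⁆) :
    skewTraceForm A c x = 0 := by
  rw [skewTraceForm_apply, hc, Ring.lie_def, sub_mul, map_sub, map_sub, mul_assoc, map_mul,
    LinearMap.trace_mul_comm, ← map_mul, sub_self, Complex.zero_re]

theorem lie_mem_skewAdjoint {R : Type*} [Ring R] [StarRing R] {x y : R} (hx : x ∈ skewAdjoint R)
    (hy : y ∈ skewAdjoint R) : ⁅x, y⁆ ∈ skewAdjoint R := by
  rw [skewAdjoint.mem_iff] at hx hy ⊢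
  simp [Ring.lie_def, hx, hy]

variable (A) in
theorem exists_basis_isUnimodularFrame [FiniteDimensional ℂ A] {n : ℕ} (hn : finrank ℝ 𝔲(A) = n) :
    ∃ b : Basis (Fin n) ℝ 𝔲(A), IsUnimodularFrame fun i => (b i : A) := by
  have : FiniteDimensional ℝ A := FiniteDimensional.complexToReal A
  subst hn
  obtain ⟨b, hb⟩ := LinearMap.BilinForm.exists_orthogonal_basis (skewTraceForm_isSymm (A := A))
  refine ⟨b, fun i j => ?_⟩
  let c : 𝔲(A) := ⟨⁅(b i : A), (b j : A)⁆, lie_mem_skewAdjoint (b i).2 (b j).2⟩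
  have hci : skewTraceForm A c (b i) = 0 := skewTraceForm_lie_left rfl
  have hcj : skewTraceForm A c (b j) = 0 := by
    rw [← neg_eq_zero, ← LinearMap.neg_apply, ← map_neg]
    exact skewTraceForm_lie_left (y := b i) <| by
      simp only [c, Ring.lie_def, NegMemClass.coe_neg, neg_sub]
  have hc : c ∈ Submodule.span ℝ (b '' {i, j}ᶜ) :=
    basis_mem_span_image_compl b hb (fun k _ => skewTraceForm_self_ne_zero (b.ne_zero k))
      (by simp [hci, hcj])
  simpa only [Submodule.map_span, image_image, Submodule.subtype_apply] using
    Submodule.mem_map_of_mem (f := 𝔲(A).subtype) hc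

end UnimodularFrame

section HaarIntegral

variable {G E : Type*} [NormedAddCommGroup E]

theorem integrable_of_continuous_of_compactSpace [TopologicalSpace G] [CompactSpace G]
    [MeasurableSpace G] [OpensMeasurableSpace G] {μ : Measure G} [IsFiniteMeasure μ] {f : G → E}
    (hf : Continuous f) : Integrable f μ :=
  hf.integrable_of_hasCompactSupport (.of_compactSpace f)

variable [NormedSpace ℝ E]

theorem hasDerivAt_integral_of_continuous [TopologicalSpace G] [CompactSpace G]
    [MeasurableSpace G] [OpensMeasurableSpace G] (μ : Measure G) [IsFiniteMeasure μ]
    {f f' : ℝ → G → E} (hf : Continuous (Function.uncurry f))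
    (hf' : Continuous (Function.uncurry f'))
    (hderiv : ∀ t u, HasDerivAt (f · u) (f' t u) t) (t : ℝ) :
    HasDerivAt (fun s => ∫ u, f s u ∂μ) (∫ u, f' t u ∂μ) t := by
  have hcompact : IsCompact (Icc (t - 1) (t + 1) ×ˢ (univ : Set G)) :=
    isCompact_Icc.prod isCompact_univ
  obtain ⟨C, hC⟩ := hcompact.exists_bound_of_continuousOn hf'.continuousOn
  have hfi (s : ℝ) : Integrable (f s) μ :=
    integrable_of_continuous_of_compactSpace (hf.comp (Continuous.prodMk_right s))
  have hfi' : Integrable (f' t) μ :=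
    integrable_of_continuous_of_compactSpace (hf'.comp (Continuous.prodMk_right t))
  exact (hasDerivAt_integral_of_dominated_loc_of_deriv_le
    (Icc_mem_nhds (sub_one_lt t) (lt_add_one t))
    (.of_forall fun s => (hfi s).aestronglyMeasurable) (hfi t) hfi'.aestronglyMeasurable
    (.of_forall fun u s hs => hC (s, u) ⟨hs, mem_univ u⟩) (integrable_const C)
    (.of_forall fun u s _ => hderiv s u)).2

variable {A : Type*} [CStarAlgebra A]

theorem exp_smul_mem_unitary {X : A} (hX : X ∈ skewAdjoint A) (s : ℝ) :
    NormedSpace.exp (s • X) ∈ unitary A :=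
  let +nondep : NormedAlgebra ℚ A := .restrictScalars ℚ ℂ A
  NormedSpace.exp_mem_unitary_of_mem_skewAdjoint (skewAdjoint.smul_mem s hX)

theorem hasDerivAt_exp_smul_mul_zero (X a : A) :
    HasDerivAt (fun s : ℝ => NormedSpace.exp (s • X) * a) (X * a) 0 := by
  simpa using (hasDerivAt_exp_smul_const' (𝕂 := ℝ) X 0).mul_const a

theorem contDiff_exp {n : WithTop ℕ∞} : ContDiff ℝ n (NormedSpace.exp : A → A) :=
  contDiff_iff_contDiffAt.2 fun x => (NormedSpace.exp_analytic (𝕂 := ℝ) x).contDiffAt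

theorem integral_fderiv_mul_left_eq_zero [CompactSpace (unitary A)] [MeasurableSpace (unitary A)]
    [BorelSpace (unitary A)] (μ : Measure (unitary A)) [IsFiniteMeasure μ] [μ.IsMulLeftInvariant]
    {h : A → E} (hh : ContDiff ℝ 1 h) {X : A} (hX : X ∈ skewAdjoint A) :
    ∫ u : unitary A, fderiv ℝ h u (X * u) ∂μ = 0 := by
  let e (s : ℝ) : unitary A := ⟨NormedSpace.exp (s • X), exp_smul_mem_unitary hX s⟩
  have he : Continuous fun s : ℝ => NormedSpace.exp (s • X) :=
    (contDiff_exp (n := 0)).continuous.comp (by fun_prop)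
  have hfd : Continuous (fderiv ℝ h) := hh.continuous_fderiv one_ne_zero
  have hderiv := hasDerivAt_integral_of_continuous μ (f := fun s u => h (e s * u))
    (f' := fun s u => fderiv ℝ h (e s * u) (X * e s * u))
    (hh.continuous.comp (by fun_prop)) ((hfd.comp (by fun_prop)).clm_apply (by fun_prop))
    (fun s u => (hh.differentiable one_ne_zero _).hasFDerivAt.comp_hasDerivAt s
      ((hasDerivAt_exp_smul_const' X s).mul_const (u : A))) 0
  have hconst (s : ℝ) : ∫ u : unitary A, h (e s * u) ∂μ = ∫ u : unitary A, h u ∂μ :=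
    integral_mul_left_eq_self (fun u : unitary A => h u) (e s)
  simp only [hconst] at hderiv
  simpa [e] using hderiv.unique (hasDerivAt_const _ _)

end HaarIntegral

section SpacetimeFrame

theorem range_removeNth_removeNth {α : Type*} {n : ℕ} (v : Fin (n + 2) → α) (i : Fin (n + 2))
    (j : Fin (n + 1)) : range (j.removeNth (i.removeNth v)) = v '' {i, i.succAbove j}ᶜ := by
  have himage : i.succAbove '' {j}ᶜ = {i, i.succAbove j}ᶜ := by
    rw [compl_eq_univ_sdiff, image_sdiff i.succAbove_right_injective, image_univ,
      Fin.range_succAbove, image_singleton, insert_eq, compl_union, sdiff_eq]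
  rw [← himage, ← Fin.range_succAbove, ← range_comp, ← range_comp]
  rfl

variable {A : Type*} [Ring A] {n : ℕ}

/-- The frame on `ℝ × A` consisting of `∂/∂t` and of the right-invariant vector fields
`u ↦ X j * u`. -/
def spacetimeFrame (X : Fin n → A) : Fin (n + 1) → ℝ × A → ℝ × A :=
  Fin.cons (fun _ => (1, 0)) fun j x => (0, X j * x.2)

@[simp]
theorem spacetimeFrame_zero (X : Fin n → A) (x : ℝ × A) : spacetimeFrame X 0 x = (1, 0) := rfl

@[simp]
theorem spacetimeFrame_succ (X : Fin n → A) (j : Fin n) (x : ℝ × A) :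
    spacetimeFrame X j.succ x = (0, X j * x.2) := rfl

end SpacetimeFrame

section SpacetimeFrameCalculus

variable {A : Type*} [NormedRing A] [NormedAlgebra ℝ A] {n : ℕ}

theorem contDiff_spacetimeFrame {m : WithTop ℕ∞} (X : Fin n → A) (i : Fin (n + 1)) :
    ContDiff ℝ m (spacetimeFrame X i) := by
  cases i using Fin.cases with
  | zero => exact contDiff_const
  | succ j => exact contDiff_const.prodMk (contDiff_const.mul contDiff_snd)

theorem fderiv_spacetimeFrame_zero (X : Fin n → A) (x : ℝ × A) :
    fderiv ℝ (spacetimeFrame X 0) x = 0 :=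
  fderiv_const_apply _

theorem fderiv_spacetimeFrame_succ_apply (X : Fin n → A) (j : Fin n) (x v : ℝ × A) :
    fderiv ℝ (spacetimeFrame X j.succ) x v = (0, X j * v.2) :=
  congrArg (· v) ((0 : ℝ × A →L[ℝ] ℝ).prod
    ((ContinuousLinearMap.mul ℝ A (X j)).comp (.snd ℝ ℝ A))).fderiv

theorem lieBracket_spacetimeFrame_mem_span {X : Fin n → A} (hX : IsUnimodularFrame X)
    (i j : Fin (n + 1)) (x : ℝ × A) :
    VectorField.lieBracket ℝ (spacetimeFrame X i) (spacetimeFrame X j) x ∈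
      Submodule.span ℝ ((spacetimeFrame X · x) '' {i, j}ᶜ) := by
  rw [VectorField.lieBracket_eq]
  cases i using Fin.cases with
  | zero => cases j using Fin.cases <;>
      simp [fderiv_spacetimeFrame_zero, fderiv_spacetimeFrame_succ_apply, Prod.mk_zero_zero]
  | succ i =>
    cases j using Fin.cases with
    | zero =>
      simp [fderiv_spacetimeFrame_zero, fderiv_spacetimeFrame_succ_apply, Prod.mk_zero_zero]
    | succ j =>
      let L : A →ₗ[ℝ] ℝ × A := LinearMap.inr ℝ ℝ A ∘ₗ LinearMap.mulRight ℝ x.2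
      have hL := Submodule.mem_map_of_mem (f := L) (hX j i)
      rw [Submodule.map_span, image_image] at hL
      have hsub : (fun k => L (X k)) '' {j, i}ᶜ ⊆
          (spacetimeFrame X · x) '' {i.succ, j.succ}ᶜ := by
        rintro _ ⟨k, hk, rfl⟩
        exact ⟨k.succ, by simpa [and_comm] using hk, rfl⟩
      convert Submodule.span_mono hsub hL using 1
      simp [L, fderiv_spacetimeFrame_succ_apply, Ring.lie_def, sub_mul, mul_assoc]

theorem extDeriv_spacetimeFrame {E : Type*} [NormedAddCommGroup E] [NormedSpace ℝ E]
    {X : Fin (n + 1) → A} (hX : IsUnimodularFrame X)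
    {Ω : ℝ × A → (ℝ × A) [⋀^Fin (n + 1)]→L[ℝ] E} {x : ℝ × A} (hΩ : DifferentiableAt ℝ Ω x) :
    extDeriv Ω x (spacetimeFrame X · x) =
      ∑ i : Fin (n + 2), (-1) ^ i.val •
        fderiv ℝ (fun y => Ω y (i.removeNth (spacetimeFrame X · y))) x (spacetimeFrame X i x) := by
  rw [extDeriv_apply_vectorField hΩ fun i =>
    (contDiff_spacetimeFrame X i).differentiable one_ne_zero x, sub_eq_self]
  refine Finset.sum_eq_zero fun i _ => Finset.sum_eq_zero fun j hij => ?_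
  have hspan : VectorField.lieBracket ℝ (spacetimeFrame X i.castSucc) (spacetimeFrame X j.succ) x ∈
      Submodule.span ℝ (range (j.removeNth (i.castSucc.removeNth (spacetimeFrame X · x)))) := by
    rw [range_removeNth_removeNth,
      Fin.succAbove_of_le_castSucc _ _ (Fin.castSucc_le_castSucc_iff.2 (Finset.mem_Ici.1 hij))]
    exact lieBracket_spacetimeFrame_mem_span hX _ _ x
  exact smul_eq_zero_of_right _
    (alternatingMap_vecCons_eq_zero_of_mem_span (Ω x).toAlternatingMap hspan)

end SpacetimeFrameCalculus

section Stokes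

variable {A E : Type*} [CStarAlgebra A] [NormedAddCommGroup E] [NormedSpace ℝ E]
  [CompactSpace (unitary A)] [MeasurableSpace (unitary A)] [BorelSpace (unitary A)]
  (μ : Measure (unitary A)) [IsFiniteMeasure μ] {n : ℕ}

theorem integral_fderiv_spacetimeFrame_succ_eq_zero [μ.IsMulLeftInvariant] {X : Fin n → A}
    (hXs : ∀ i, X i ∈ skewAdjoint A) {g : ℝ × A → E} (hg : ContDiff ℝ 1 g) (t : ℝ) (j : Fin n) :
    ∫ u : unitary A, fderiv ℝ g (t, (u : A)) (spacetimeFrame X j.succ (t, u)) ∂μ = 0 := by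
  have hslice (u : A) : HasFDerivAt (fun a => g (t, a))
      (fderiv ℝ g (t, u) ∘L ContinuousLinearMap.inr ℝ ℝ A) u :=
    (hg.differentiable one_ne_zero (t, u)).hasFDerivAt.comp u (hasFDerivAt_prodMk_right t u)
  have hzero := integral_fderiv_mul_left_eq_zero (h := fun a => g (t, a)) μ
    (hg.comp (contDiff_const.prodMk contDiff_id)) (hXs j)
  simp only [(hslice _).fderiv] at hzero
  exact hzero

theorem hasDerivAt_integral_fderiv_spacetimeFrame_zero (X : Fin n → A) {g : ℝ × A → E}
    (hg : ContDiff ℝ 1 g) (t : ℝ) :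
    HasDerivAt (fun s => ∫ u : unitary A, g (s, (u : A)) ∂μ)
      (∫ u : unitary A, fderiv ℝ g (t, (u : A)) (spacetimeFrame X 0 (t, u)) ∂μ) t := by
  have hg' : Continuous (fderiv ℝ g) := hg.continuous_fderiv one_ne_zero
  refine hasDerivAt_integral_of_continuous μ (f := fun s u => g (s, (u : A)))
    (f' := fun s u => fderiv ℝ g (s, (u : A)) (1, 0)) (hg.continuous.comp (by fun_prop))
    ((hg'.comp (by fun_prop)).clm_apply continuous_const) (fun s u => ?_) t
  exact (hg.differentiable one_ne_zero _).hasFDerivAt.comp_hasDerivAt s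
    ((hasDerivAt_id s).prodMk (hasDerivAt_const s (u : A)))

theorem hasDerivAt_integral_eq_integral_extDeriv [μ.IsMulLeftInvariant] {X : Fin (n + 1) → A}
    (hXs : ∀ i, X i ∈ skewAdjoint A) (hX : IsUnimodularFrame X)
    {Ω : ℝ × A → (ℝ × A) [⋀^Fin (n + 1)]→L[ℝ] E} (hΩ : Differentiable ℝ Ω)
    (hΩX : ∀ i : Fin (n + 2), ContDiff ℝ 1 fun x => Ω x (i.removeNth (spacetimeFrame X · x)))
    (t : ℝ) :
    HasDerivAt (fun s => ∫ u : unitary A, Ω (s, u) (fun j => (0, X j * u)) ∂μ)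
      (∫ u : unitary A, extDeriv Ω (t, u) (spacetimeFrame X · (t, u)) ∂μ) t := by
  have hcont (i : Fin (n + 2)) : Continuous fun u : unitary A =>
      fderiv ℝ (fun x => Ω x (i.removeNth (spacetimeFrame X · x))) (t, (u : A))
        (spacetimeFrame X i (t, u)) :=
    (((hΩX i).continuous_fderiv one_ne_zero).comp (by fun_prop)).clm_apply
      ((contDiff_spacetimeFrame (m := 0) X i).continuous.comp (by fun_prop))
  suffices h : ∫ u : unitary A, extDeriv Ω (t, u) (spacetimeFrame X · (t, u)) ∂μ =
      ∫ u : unitary A, fderiv ℝ (fun x => Ω x (Fin.removeNth 0 (spacetimeFrame X · x))) (t, (u : A))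
        (spacetimeFrame X 0 (t, u)) ∂μ from
    h ▸ hasDerivAt_integral_fderiv_spacetimeFrame_zero μ X (hΩX 0) t
  simp_rw [extDeriv_spacetimeFrame hX (hΩ _), ← Int.cast_smul_eq_zsmul ℝ]
  rw [integral_finsetSum _ fun i _ =>
    (integrable_of_continuous_of_compactSpace (hcont i)).fun_smul (((-1) ^ i.val : ℤ) : ℝ)]
  simp_rw [integral_smul]
  rw [Fin.sum_univ_succ, Finset.sum_eq_zero fun j _ => ?_]
  · simp
  · rw [integral_fderiv_spacetimeFrame_succ_eq_zero μ hXs (hΩX j.succ), smul_zero]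

end Stokes

section Pullback

variable {A E : Type*} [CStarAlgebra A] [NormedAddCommGroup E] [NormedSpace ℝ E]

theorem mul_star_mem_skewAdjoint_of_hasDerivAt {c : ℝ → A} {c' : A} {t : ℝ}
    (hc : HasDerivAt c c' t) (hcu : ∀ s, c s ∈ unitary A) : c' * star (c t) ∈ skewAdjoint A := by
  have hone : HasDerivAt (fun _ : ℝ => (1 : A)) (c' * star (c t) + c t * star c') t := by
    simpa only [Unitary.mul_star_self_of_mem (hcu _)] using hc.fun_mul hc.star
  rw [skewAdjoint.mem_iff, star_mul, star_star]
  exact (neg_eq_of_add_eq_zero_right (hone.unique (hasDerivAt_const t 1))).symm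

theorem fderiv_spacetimeFrame_mul_star_mem_skewAdjoint {n : ℕ} {X : Fin n → A}
    (hXs : ∀ i, X i ∈ skewAdjoint A) {F : ℝ × A → A}
    (hFU : ∀ t, ∀ u ∈ unitary A, F (t, u) ∈ unitary A) {t : ℝ} {u : A} (hu : u ∈ unitary A)
    (hF : DifferentiableAt ℝ F (t, u)) (i : Fin (n + 1)) :
    fderiv ℝ F (t, u) (spacetimeFrame X i (t, u)) * star (F (t, u)) ∈ skewAdjoint A := by
  cases i using Fin.cases with
  | zero =>
    have hline : HasDerivAt (fun s : ℝ => (s, u)) ((1 : ℝ), (0 : A)) t :=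
      (hasDerivAt_id t).prodMk (hasDerivAt_const t u)
    exact mul_star_mem_skewAdjoint_of_hasDerivAt (hF.hasFDerivAt.comp_hasDerivAt t hline)
      fun s => hFU s u hu
  | succ j =>
    have hcurve : HasDerivAt (fun s : ℝ => (t, NormedSpace.exp (s • X j) * u)) (0, X j * u) 0 :=
      (hasDerivAt_const 0 t).prodMk (hasDerivAt_exp_smul_mul_zero (X j) u)
    have hFd : HasFDerivAt F (fderiv ℝ F (t, u)) (t, NormedSpace.exp ((0 : ℝ) • X j) * u) := by
      simpa using hF.hasFDerivAt
    simpa using mul_star_mem_skewAdjoint_of_hasDerivAt (hFd.comp_hasDerivAt 0 hcurve)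
      fun s => hFU t _ (mul_mem (exp_smul_mem_unitary (hXs j) s) hu)

theorem extDeriv_pullback_spacetimeFrame_eq_zero [FiniteDimensional ℝ A] {n : ℕ}
    (hn : finrank ℝ 𝔲(A) = n) {X : Fin n → A} (hXs : ∀ i, X i ∈ skewAdjoint A)
    {ω : A → A [⋀^Fin n]→L[ℝ] E} (hω : Differentiable ℝ ω) {F : ℝ × A → A}
    (hF : ContDiff ℝ 2 F) (hFU : ∀ t, ∀ u ∈ unitary A, F (t, u) ∈ unitary A) (t : ℝ) {u : A}
    (hu : u ∈ unitary A) :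
    extDeriv (fun x => (ω (F x)).compContinuousLinearMap (fderiv ℝ F x)) (t, u)
      (spacetimeFrame X · (t, u)) = 0 := by
  rw [extDeriv_pullback (hω _) hF.contDiffAt (by simp)]
  let S : Submodule ℝ A := 𝔲(A).map (LinearMap.mulRight ℝ (F (t, u)))
  have hS : finrank ℝ S < Fintype.card (Fin (n + 1)) := by
    rw [Fintype.card_fin, Nat.lt_succ_iff, ← hn]
    exact Submodule.finrank_map_le _ _
  refine alternatingMap_eq_zero_of_finrank_lt
    (extDeriv ω (F (t, u))).toAlternatingMap hS fun i => ?_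
  have hskew := fderiv_spacetimeFrame_mul_star_mem_skewAdjoint hXs hFU (t := t) hu
    (hF.differentiable two_ne_zero _) i
  have hmem : fderiv ℝ F (t, u) (spacetimeFrame X i (t, u)) ∈ S := ⟨_, hskew, by
    rw [LinearMap.mulRight_apply, mul_assoc, Unitary.star_mul_self_of_mem (hFU t u hu), mul_one]⟩
  exact hmem

variable [CompactSpace (unitary A)] [MeasurableSpace (unitary A)] [BorelSpace (unitary A)]

theorem integral_pullback_eq [FiniteDimensional ℝ A] {n : ℕ} (hn : finrank ℝ 𝔲(A) = n + 1)
    {X : Fin (n + 1) → A} (hXs : ∀ i, X i ∈ skewAdjoint A) (hX : IsUnimodularFrame X)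
    {ω : A → A [⋀^Fin (n + 1)]→L[ℝ] E} (hω : Differentiable ℝ ω)
    (hω' : ContDiff ℝ 1 fun p : A × (Fin (n + 1) → A) => ω p.1 p.2) {F : ℝ × A → A}
    (hF : ContDiff ℝ 2 F) (hFU : ∀ t, ∀ u ∈ unitary A, F (t, u) ∈ unitary A)
    (μ : Measure (unitary A)) [IsFiniteMeasure μ] [μ.IsMulLeftInvariant] (s t : ℝ) :
    ∫ u : unitary A, ω (F (s, u)) (fun j => fderiv ℝ F (s, u) (0, X j * u)) ∂μ =
      ∫ u : unitary A, ω (F (t, u)) (fun j => fderiv ℝ F (t, u) (0, X j * u)) ∂μ := by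
  let Ω (x : ℝ × A) : (ℝ × A) [⋀^Fin (n + 1)]→L[ℝ] E :=
    (ω (F x)).compContinuousLinearMap (fderiv ℝ F x)
  have hF₁ : ContDiff ℝ 1 F := hF.of_le one_le_two
  have hF' : ContDiff ℝ 1 (fderiv ℝ F) := hF.fderiv_right (by norm_num)
  have hΩ : Differentiable ℝ Ω := fun x =>
    ((hω _).comp x
      (hF₁.differentiable one_ne_zero x)).continuousAlternatingMapCompContinuousLinearMap
        (hF'.differentiable one_ne_zero x)
  have hΩX (i : Fin (n + 2)) :
      ContDiff ℝ 1 fun x => Ω x (i.removeNth (spacetimeFrame X · x)) :=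
    hω'.comp (hF₁.prodMk <| contDiff_pi.2 fun j =>
      hF'.clm_apply (contDiff_spacetimeFrame X (i.succAbove j)))
  have hderiv (r : ℝ) : HasDerivAt
      (fun r => ∫ u : unitary A, Ω (r, u) (fun j => (0, X j * u)) ∂μ) 0 r := by
    have h := hasDerivAt_integral_eq_integral_extDeriv μ hXs hX hΩ hΩX r
    simpa only [Ω, extDeriv_pullback_spacetimeFrame_eq_zero hn hXs hω hF hFU r (Subtype.prop _),
      integral_zero] using h
  exact is_const_of_deriv_eq_zero (fun r => (hderiv r).differentiableAt)
    (fun r => (hderiv r).deriv) s t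

end Pullback

section AdjointRep

variable {A : Type*} [CStarAlgebra A]

theorem norm_unitary_mul_mul_star (u : unitary A) (x : A) : ‖(u : A) * x * star (u : A)‖ = ‖x‖ := by
  rw [CStarRing.norm_mul_mem_unitary _ (Unitary.star_mem u.2),
    CStarRing.norm_mem_unitary_mul _ u.2]

/-- The adjoint representation `x ↦ u * x * star u` of the unitary group of `A` on its Lie
algebra. -/
noncomputable def adjointRep : unitary A →* 𝔲(A) →L[ℝ] 𝔲(A) where
  toFun u :=
    let f : 𝔲(A) →ₗ[ℝ] 𝔲(A) :=
      { toFun x := ⟨u * x * star (u : A), skewAdjoint.conjugate x.2 u⟩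
        map_add' x y := Subtype.ext (by simp [mul_add, add_mul])
        map_smul' c x := Subtype.ext (by simp) }
    f.mkContinuous 1 fun x => ((norm_unitary_mul_mul_star u x).trans (one_mul _).symm).le
  map_one' := by ext x; simp
  map_mul' u v := by ext x; simp [mul_assoc]

theorem coe_adjointRep_apply (u : unitary A) (x : 𝔲(A)) :
    (adjointRep u x : A) = u * x * star (u : A) := rfl

theorem norm_adjointRep_le_one (u : unitary A) : ‖adjointRep u‖ ≤ 1 :=
  ContinuousLinearMap.opNorm_le_bound _ zero_le_one fun x =>
    ((norm_unitary_mul_mul_star u x).trans (one_mul _).symm).le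

theorem continuous_adjointRep [FiniteDimensional ℝ A] :
    Continuous (adjointRep : unitary A → 𝔲(A) →L[ℝ] 𝔲(A)) :=
  continuous_clm_apply.2 fun x => Continuous.subtype_mk
    (f := fun u : unitary A => (u : A) * x * star (u : A)) (by fun_prop) _

theorem hasDerivAt_pow_of_mul_unitary {c : ℝ → A} {x : 𝔲(A)} {u : unitary A} {t : ℝ}
    (hc : HasDerivAt c (x * u) t) (hu : c t = u) (k : ℕ) :
    HasDerivAt (fun s => c s ^ k)
      (((∑ i ∈ Finset.range k, adjointRep u ^ i) x : 𝔲(A)) * (u : A) ^ k) t := by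
  induction k with
  | zero => simpa using hasDerivAt_const t (1 : A)
  | succ k ih =>
    have hstar : star (u : A) ^ k * (u : A) ^ k = 1 := by
      rw [← star_pow, Unitary.star_mul_self_of_mem (pow_mem u.2 k)]
    simp only [pow_succ]
    convert ih.fun_mul hc using 1
    rw [hu, Finset.sum_range_succ, add_apply, Submodule.coe_add, ← map_pow,
      coe_adjointRep_apply, add_mul]
    simp only [SubmonoidClass.coe_pow, star_pow, mul_assoc]
    rw [← mul_assoc (star (u : A) ^ k), hstar, one_mul]

theorem fderiv_mul_star_of_eq_pow {F : ℝ × A → A} {t : ℝ} {k : ℕ}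
    (hFt : ∀ u ∈ unitary A, F (t, u) = u ^ k) {u : unitary A}
    (hF : DifferentiableAt ℝ F (t, (u : A))) (x : 𝔲(A)) :
    fderiv ℝ F (t, (u : A)) (0, x * u) * star (F (t, (u : A))) =
      ((∑ i ∈ Finset.range k, adjointRep u ^ i) x : 𝔲(A)) := by
  have hcurve := hasDerivAt_exp_smul_mul_zero (x : A) (u : A)
  have hFd : HasFDerivAt F (fderiv ℝ F (t, (u : A)))
      (t, NormedSpace.exp ((0 : ℝ) • (x : A)) * u) := by
    simpa using hF.hasFDerivAt
  have hderiv := hFd.comp_hasDerivAt 0 ((hasDerivAt_const 0 t).prodMk hcurve)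
  have hpow : (F ∘ fun s : ℝ => (t, NormedSpace.exp (s • (x : A)) * u)) =
      fun s => (NormedSpace.exp (s • (x : A)) * u) ^ k :=
    funext fun s => hFt _ (mul_mem (exp_smul_mem_unitary x.2 s) u.2)
  rw [hpow] at hderiv
  rw [hderiv.unique (hasDerivAt_pow_of_mul_unitary hcurve (by simp) k), hFt _ u.2, mul_assoc,
    Unitary.mul_star_self_of_mem (pow_mem u.2 k), mul_one]

end AdjointRep

section Degree

variable {A : Type*} [CStarAlgebra A]

theorem compactSpace_unitary [FiniteDimensional ℝ A] : CompactSpace (unitary A) := by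
  have : ProperSpace A := FiniteDimensional.proper ℝ A
  exact isCompact_iff_compactSpace.1 <| Metric.isCompact_of_isClosed_isBounded isClosed_unitary <|
    isBounded_iff_forall_norm_le.2 ⟨‖(1 : A)‖, fun _ hu => by
      simpa only [mul_one] using (CStarRing.norm_mem_unitary_mul 1 hu).le⟩

variable (A) in
theorem finrank_skewAdjoint_ne_zero [FiniteDimensional ℝ A] [Nontrivial A] :
    finrank ℝ 𝔲(A) ≠ 0 := by
  have hI : Complex.I • (1 : A) ∈ 𝔲(A) := skewAdjoint.mem_iff.2 (by simp)
  have : Nontrivial 𝔲(A) := nontrivial_of_ne ⟨_, hI⟩ 0 fun h => by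
    simpa using congrArg Subtype.val h
  exact finrank_pos.ne'

theorem exists_alternating_apply_eq_det [FiniteDimensional ℝ A] {n : ℕ}
    (b : Basis (Fin n) ℝ 𝔲(A)) :
    ∃ D : A [⋀^Fin n]→L[ℝ] ℝ, ∀ T : 𝔲(A) →L[ℝ] 𝔲(A), D (fun j => (T (b j) : A)) = T.det := by
  let P : A →ₗ[ℝ] 𝔲(A) := skewAdjointPart ℝ
  have hP (x : 𝔲(A)) : P x = x := Subtype.ext <| by
    change (⅟2 : ℝ) • ((x : A) - star (x : A)) = x
    rw [skewAdjoint.mem_iff.1 x.2, sub_neg_eq_add, ← two_smul ℝ (x : A), invOf_smul_smul]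
  have hcont : Continuous (b.det.compLinearMap P) := by
    have : Continuous (b.equivFun.toLinearMap ∘ₗ P) := LinearMap.continuous_of_finiteDimensional _
    exact Continuous.matrix_det <| continuous_matrix fun i j =>
      (continuous_apply i).comp (this.comp (continuous_apply j))
  refine ⟨{ b.det.compLinearMap P with cont := hcont }, fun T => ?_⟩
  have hdet := b.det_comp (T : 𝔲(A) →ₗ[ℝ] 𝔲(A)) b
  rw [b.det_self, mul_one] at hdet
  exact (congrArg b.det (funext fun j => hP _)).trans hdet

theorem integral_mul_det_geom_sum_adjointRep_pos [FiniteDimensional ℝ A] [CompactSpace (unitary A)]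
    [MeasurableSpace (unitary A)] [BorelSpace (unitary A)] (μ : Measure (unitary A))
    [IsFiniteMeasure μ] [μ.IsOpenPosMeasure] {φ : unitary A → ℝ} (hφ : Continuous φ)
    (hφ₀ : ∀ u, 0 ≤ φ u) (hφ₁ : 0 < φ 1) {k : ℕ} (hk : 0 < k) :
    0 < ∫ u : unitary A, φ u * (∑ i ∈ Finset.range k, adjointRep u ^ i).det ∂μ := by
  have hcont : Continuous fun u : unitary A =>
      φ u * (∑ i ∈ Finset.range k, adjointRep u ^ i).det :=
    hφ.mul <| ContinuousLinearMap.continuous_det.comp <|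
      continuous_finsetSum _ fun i _ => by
        simpa only [← map_pow, Function.comp_def] using
          continuous_adjointRep.comp (continuous_pow i)
  have hdet : 0 < (∑ i ∈ Finset.range k, adjointRep (1 : unitary A) ^ i).det := by
    simp [ContinuousLinearMap.det, ← Nat.cast_smul_eq_nsmul ℝ, hk]
  exact hcont.integral_pos_of_hasCompactSupport_nonneg_nonzero (.of_compactSpace _)
    (fun u => mul_nonneg (hφ₀ u) (det_geom_sum_nonneg_of_norm_le_one (norm_adjointRep_le_one u) k))
    (mul_pos hφ₁ hdet).ne'

theorem integral_mul_alternating_logDeriv_eq [FiniteDimensional ℝ A] [CompactSpace (unitary A)]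
    [MeasurableSpace (unitary A)] [BorelSpace (unitary A)] {n : ℕ} (hn : finrank ℝ 𝔲(A) = n + 1)
    {X : Fin (n + 1) → A} (hXs : ∀ i, X i ∈ skewAdjoint A) (hX : IsUnimodularFrame X)
    (D : A [⋀^Fin (n + 1)]→L[ℝ] ℝ) {φ : A → ℝ} (hφ : ContDiff ℝ 1 φ) {F : ℝ × A → A}
    (hF : ContDiff ℝ 2 F) (hFU : ∀ t, ∀ u ∈ unitary A, F (t, u) ∈ unitary A)
    (μ : Measure (unitary A)) [IsFiniteMeasure μ] [μ.IsMulLeftInvariant] (s t : ℝ) :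
    ∫ u : unitary A, φ (F (s, u)) *
        D (fun j => fderiv ℝ F (s, u) (0, X j * u) * star (F (s, u))) ∂μ =
      ∫ u : unitary A, φ (F (t, u)) *
        D (fun j => fderiv ℝ F (t, u) (0, X j * u) * star (F (t, u))) ∂μ := by
  let R : A →L[ℝ] A →L[ℝ] A :=
    (ContinuousLinearMap.mul ℝ A).flip ∘L (starL' ℝ (A := A)).toContinuousLinearMap
  refine integral_pullback_eq hn hXs hX (ω := fun p => φ p • D.compContinuousLinearMap (R p))
    (fun p => ?_) ?_ hF hFU μ s t
  · exact (hφ.differentiable one_ne_zero p).smul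
      ((differentiableAt_const D).continuousAlternatingMapCompContinuousLinearMap
        R.differentiableAt)
  · have hstar : ContDiff ℝ 1 (star : A → A) := (starL' ℝ (A := A)).contDiff
    refine (hφ.comp contDiff_fst).smul (D.toContinuousMultilinearMap.contDiff.comp ?_)
    exact contDiff_pi.2 fun j =>
      ((contDiff_apply ℝ A j).comp contDiff_snd).mul (hstar.comp contDiff_fst)

theorem exists_contDiffBump_eq_zero_of_isCompact {E : Type*} [NormedAddCommGroup E]
    [NormedSpace ℝ E] [HasContDiffBump E] {K : Set E} (hK : IsCompact K) {x : E} (hx : x ∉ K) :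
    ∃ φ : ContDiffBump x, ∀ y ∈ K, φ y = 0 := by
  obtain ⟨r, hr, hball⟩ := Metric.isOpen_iff.1 hK.isClosed.isOpen_compl x hx
  refine ⟨⟨r / 2, r, half_pos hr, half_lt_self hr⟩, fun y hy => ?_⟩
  exact ContDiffBump.zero_of_le_dist _ (not_lt.1 fun hlt => hball (Metric.mem_ball.2 hlt) hy)

theorem exists_unitary_eq_one_of_eq_pow [FiniteDimensional ℂ A] [Nontrivial A] {F : ℝ × A → A}
    (hF : ContDiff ℝ 2 F) (hFU : ∀ t, ∀ u ∈ unitary A, F (t, u) ∈ unitary A) {k : ℕ} (hk : 0 < k)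
    {s : ℝ} (hFs : ∀ u ∈ unitary A, F (s, u) = u ^ k) (t : ℝ) : ∃ u ∈ unitary A, F (t, u) = 1 := by
  have : FiniteDimensional ℝ A := FiniteDimensional.complexToReal A
  have : CompactSpace (unitary A) := compactSpace_unitary
  let _ : MeasurableSpace (unitary A) := borel (unitary A)
  have : BorelSpace (unitary A) := ⟨rfl⟩
  let μ : Measure (unitary A) := Measure.haar
  obtain ⟨n, hn⟩ := Nat.exists_eq_succ_of_ne_zero (finrank_skewAdjoint_ne_zero A)
  obtain ⟨b, hb⟩ := exists_basis_isUnimodularFrame A hn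
  obtain ⟨D, hD⟩ := exists_alternating_apply_eq_det b
  have hK : IsCompact ((fun u => F (t, u)) '' unitary A) :=
    (isCompact_iff_compactSpace.2 ‹_›).image (hF.continuous.comp (Continuous.prodMk_right t))
  by_contra hne
  obtain ⟨φ, hφ⟩ := exists_contDiffBump_eq_zero_of_isCompact hK (x := 1) hne
  have hinv :=
    integral_mul_alternating_logDeriv_eq hn (fun i => (b i).2) hb D φ.contDiff hF hFU μ s t
  have hpow (u : unitary A) : D (fun j => fderiv ℝ F (s, u) (0, b j * u) * star (F (s, u))) =
      (∑ i ∈ Finset.range k, adjointRep u ^ i).det := by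
    simp_rw [fderiv_mul_star_of_eq_pow hFs (hF.differentiable two_ne_zero _), hD]
  have hpos := integral_mul_det_geom_sum_adjointRep_pos μ (φ := fun u => φ (u ^ k))
    (φ.continuous.comp (by fun_prop)) (fun u => φ.nonneg)
    (φ.pos_of_mem_ball (by simp [φ.rOut_pos])) hk
  simp_rw [hpow, hFs _ (Subtype.prop _)] at hinv
  simp [hinv, hφ _ (mem_image_of_mem _ (Subtype.prop _))] at hpos

end Degree

section Homotopy

variable {A : Type*} [CStarAlgebra A]

/-- Two self-maps of the unitary group are smoothly homotopic if some `C²` map `ℝ × A → A`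
preserving the unitary group restricts to them at times `0` and `1`. -/
def SmoothlyHomotopic (f₀ f₁ : unitary A → unitary A) : Prop :=
  ∃ F : ℝ × A → A, ContDiff ℝ 2 F ∧ (∀ t, ∀ u ∈ unitary A, F (t, u) ∈ unitary A) ∧
    (∀ u : unitary A, F (0, u) = f₀ u) ∧ ∀ u : unitary A, F (1, u) = f₁ u

namespace SmoothlyHomotopic

variable {f₀ f₁ g₀ g₁ : unitary A → unitary A}

theorem refl_id : SmoothlyHomotopic (A := A) id id :=
  ⟨Prod.snd, contDiff_snd, fun _ _ hu => hu, fun _ => rfl, fun _ => rfl⟩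

theorem const_of_path {c : ℝ → unitary A} (hc : ContDiff ℝ 2 fun t => (c t : A)) :
    SmoothlyHomotopic (fun _ => c 0) fun _ => c 1 :=
  ⟨fun x => c x.1, hc.comp contDiff_fst, fun t _ _ => (c t).2, fun _ => rfl, fun _ => rfl⟩

theorem mul (hf : SmoothlyHomotopic f₀ f₁) (hg : SmoothlyHomotopic g₀ g₁) :
    SmoothlyHomotopic (f₀ * g₀) (f₁ * g₁) := by
  obtain ⟨F, hF, hFU, hF₀, hF₁⟩ := hf
  obtain ⟨G, hG, hGU, hG₀, hG₁⟩ := hg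
  exact ⟨F * G, hF.mul hG, fun t u hu => mul_mem (hFU t u hu) (hGU t u hu),
    fun u => congrArg₂ _ (hF₀ u) (hG₀ u), fun u => congrArg₂ _ (hF₁ u) (hG₁ u)⟩

theorem inv (hf : SmoothlyHomotopic f₀ f₁) : SmoothlyHomotopic f₀⁻¹ f₁⁻¹ := by
  obtain ⟨F, hF, hFU, hF₀, hF₁⟩ := hf
  exact ⟨fun x => star (F x), (starL' ℝ (A := A)).contDiff.comp hF,
    fun t u hu => Unitary.star_mem (hFU t u hu), fun u => congrArg star (hF₀ u),
    fun u => congrArg star (hF₁ u)⟩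

theorem exists_eq_one_of_pow [FiniteDimensional ℂ A] [Nontrivial A] {k : ℕ} (hk : 0 < k)
    (h : SmoothlyHomotopic (· ^ k) f₁) : ∃ u, f₁ u = 1 := by
  obtain ⟨F, hF, hFU, hF₀, hF₁⟩ := h
  obtain ⟨u, hu, hu₁⟩ := exists_unitary_eq_one_of_eq_pow hF hFU hk (fun u hu => hF₀ ⟨u, hu⟩) 1
  exact ⟨⟨u, hu⟩, Subtype.ext ((hF₁ ⟨u, hu⟩).symm.trans hu₁)⟩

theorem exists_eq_one_of_zpow [FiniteDimensional ℂ A] [Nontrivial A] {k : ℤ} (hk : k ≠ 0)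
    (h : SmoothlyHomotopic (· ^ k) f₁) : ∃ u, f₁ u = 1 := by
  obtain ⟨m, rfl | rfl⟩ := k.eq_nat_or_neg
  · simp only [zpow_natCast] at h
    exact h.exists_eq_one_of_pow (by simpa [pos_iff_ne_zero] using hk)
  · have hinv := h.inv
    simp only [zpow_neg, zpow_natCast, Pi.inv_def, inv_inv] at hinv
    simpa using hinv.exists_eq_one_of_pow (by simpa [pos_iff_ne_zero] using hk)

end SmoothlyHomotopic

open Complex selfAdjoint Unitary in
theorem expUnitary_argSelfAdjoint_of_finite_spectrum {u : unitary A}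
    (hu : (spectrum ℂ (u : A)).Finite) : expUnitary (argSelfAdjoint u) = u := by
  have harg : ContinuousOn arg (spectrum ℂ (u : A)) := hu.continuousOn _
  ext
  rw [expUnitary_coe, argSelfAdjoint_coe, ← CFC.exp_eq_normedSpace_exp (𝕜 := ℂ),
    ← cfc_comp_smul .., ← cfc_comp' ..]
  conv_rhs => rw [← cfc_id' ℂ (u : A)]
  refine cfc_congr fun z hz => ?_
  have hz₁ : ‖z‖ = 1 := spectrum.norm_eq_one_of_unitary u.2 hz
  change NormedSpace.exp (I * (z.arg : ℂ)) = z
  rw [← exp_eq_exp_ℂ, mul_comm, ← one_mul (exp _), ← ofReal_one, ← hz₁, norm_mul_exp_arg_mul_I]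

theorem smoothlyHomotopic_one_const [FiniteDimensional ℂ A] (g : unitary A) :
    SmoothlyHomotopic 1 fun _ => g := by
  let c (t : ℝ) : unitary A := selfAdjoint.expUnitary (t • Unitary.argSelfAdjoint g)
  have hc : ContDiff ℝ 2 fun t => (c t : A) := by
    simp only [c, selfAdjoint.expUnitary_coe, selfAdjoint.val_smul]
    exact contDiff_exp.comp (by fun_prop)
  have hc₀ : c 0 = 1 := by simp [c]
  have hc₁ : c 1 = g := by
    simpa only [c, one_smul] using
      expUnitary_argSelfAdjoint_of_finite_spectrum (finite_spectrum_of_finiteDimensional (g : A))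
  simpa only [hc₀, hc₁] using! SmoothlyHomotopic.const_of_path hc

theorem smoothlyHomotopic_lift_snd [FiniteDimensional ℂ A]
    (w : Monoid.Coprod (unitary A) (FreeGroup Unit)) :
    SmoothlyHomotopic (fun u => FreeGroup.lift (fun _ => u) (Monoid.Coprod.snd w))
      (fun u => Monoid.Coprod.lift (.id _) (FreeGroup.lift fun _ => u) w) := by
  induction w using Monoid.Coprod.induction_on with
  | inl g => simpa using! smoothlyHomotopic_one_const g
  | inr x =>
    induction x using FreeGroup.induction_on with
    | C1 => simpa using! smoothlyHomotopic_one_const 1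
    | of i => simpa using! SmoothlyHomotopic.refl_id
    | inv_of i h => simpa using! h.inv
    | mul x y hx hy => simpa using! hx.mul hy
  | mul x y hx hy => simpa using! hx.mul hy

end Homotopy

theorem nonsingular_one_variable_equation_solvable_in_U_general {A : Type*} [CStarAlgebra A]
    [FiniteDimensional ℂ A] (w : Monoid.Coprod (unitary A) (FreeGroup Unit))
    (hw : Monoid.Coprod.lift (1 : unitary A →* FreeGroup Unit) (MonoidHom.id (FreeGroup Unit)) w ≠
      1) :
    ∃ u : unitary A, Monoid.Coprod.lift (MonoidHom.id (unitary A)) (FreeGroup.lift fun _ => u) w =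
      1 := by
  rcases subsingleton_or_nontrivial A with _ | _
  · exact ⟨1, Subsingleton.elim _ _⟩
  obtain ⟨k, hk⟩ : ∃ k : ℤ, Monoid.Coprod.snd w = FreeGroup.of () ^ k :=
    ⟨_, (FreeGroup.equivIntOfUnique.left_inv (Monoid.Coprod.snd w)).symm⟩
  have hk₀ : k ≠ 0 := by
    rintro rfl
    exact hw (hk.trans (zpow_zero _))
  have h := smoothlyHomotopic_lift_snd w
  simp only [hk, map_zpow, FreeGroup.lift_apply_of] at h
  exact h.exists_eq_one_of_zpow hk₀

/-- **Theorem (Gerstenhaber–Rothaus).** Every non-singular one-variable equation with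
coefficients in the unitary group `U(n)` (`n ≥ 1`), i.e. a word
`w ∈ U(n) ∗ F₁` whose content in `F₁ ≅ ℤ` is nonzero, can be solved in `U(n)`. -/
theorem nonsingular_one_variable_equation_solvable_in_U
    (n : ℕ) (hn : 1 ≤ n)
    (w : Monoid.Coprod (Matrix.unitaryGroup (Fin n) ℂ) (FreeGroup Unit))
    (hw : Monoid.Coprod.lift (1 : Matrix.unitaryGroup (Fin n) ℂ →* FreeGroup Unit)
        (MonoidHom.id (FreeGroup Unit)) w ≠ 1) :
    ∃ u : Matrix.unitaryGroup (Fin n) ℂ,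
      Monoid.Coprod.lift (MonoidHom.id (Matrix.unitaryGroup (Fin n) ℂ))
        (FreeGroup.lift fun _ => u) w = 1 := by
  open scoped Matrix.Norms.L2Operator in
  exact nonsingular_one_variable_equation_solvable_in_U_general w hw
end

section
/- For every n ≥ 1, the fundamental group of PU(n), the quotient topological group of SU(n) by its center (with the quotient topology), based at the identity coset, is isomorphic to the cyclic group ℤ/nℤ. -/
/-- The special unitary group `SU(n)`: the subgroup of the unitary group
`U(n) = Matrix.unitaryGroup (Fin n) ℂ` consisting of matrices of determinant `1`. -/
def SU (n : ℕ) : Subgroup (Matrix.unitaryGroup (Fin n) ℂ) where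
  carrier := {A | (A : Matrix (Fin n) (Fin n) ℂ).det = 1}
  mul_mem' := by
    intro a b ha hb
    simp only [Set.mem_setOf_eq] at *
    simp [Matrix.UnitaryGroup.mul_val, Matrix.det_mul, ha, hb]
  one_mem' := by simp
  inv_mem' := by
    intro a ha
    simp only [Set.mem_setOf_eq] at *
    show ((a⁻¹ : Matrix.unitaryGroup (Fin n) ℂ) : Matrix (Fin n) (Fin n) ℂ).det = 1
    rw [Matrix.UnitaryGroup.inv_val, Matrix.star_eq_conjTranspose, Matrix.det_conjTranspose, ha]
    simp

/-- The projective unitary group `PU(n)`: the quotient of `SU(n)` by its center,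
with the quotient topology. -/
abbrev PU (n : ℕ) := SU n ⧸ Subgroup.center (SU n)

/-!
`SU(n)` is simply connected, by induction on `n`: the last-column map `SU(n) → S²ⁿ⁻¹` has the
cosets of `SU(n - 1)` as fibres, and complex reflections, corrected in another column to have
determinant one, provide a section over the complement of a point. That complement is contractible,
so its preimage is homotopy equivalent to `SU(n - 1)`, and a translate of this preimage covers the
rest of `SU(n)`; the two overlap in a path connected set, and the Seifert–van Kampen argument
applies. Hence `SU(n) → PU(n)` is a universal covering whose deck group is the center. Since every
unitary matrix is a multiple of a special one and unitary matrices span all matrices, central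
elements are scalar, and so the center consists of the `n`-th roots of unity.
-/

section SeifertVanKampen

open Set unitInterval

variable {X ι : Type*} [TopologicalSpace X] {U : ι → Set X}

theorem homotopicQuotient_mk_eq_of_isSimplyConnected {s : Set X} (hs : IsSimplyConnected s)
    {x y : X} {p q : Path x y} (hp : ∀ t, p t ∈ s) (hq : ∀ t, q t ∈ s) :
    Path.Homotopic.Quotient.mk p = .mk q := by
  have := hs.simplyConnectedSpace
  have hx : x ∈ s := p.source ▸ hp 0
  have hy : y ∈ s := p.target ▸ hp 1
  let codRestrict (r : Path x y) (hr : ∀ t, r t ∈ s) : Path (⟨x, hx⟩ : s) ⟨y, hy⟩ :=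
    { toFun := fun t => ⟨r t, hr t⟩, source' := by simp, target' := by simp }
  exact Path.Homotopic.Quotient.eq.2 <| (SimplyConnectedSpace.paths_homotopic
    (codRestrict p hp) (codRestrict q hq)).map ⟨Subtype.val, continuous_subtype_val⟩

theorem homotopicQuotient_induction_of_isOpen_cover (hU : ∀ i, IsOpen (U i))
    (hcover : ⋃ i, U i = univ) {P : ∀ {x y : X}, Path.Homotopic.Quotient x y → Prop}
    (small : ∀ (i : ι) {x y : X} (p : Path x y), (∀ t, p t ∈ U i) → P (.mk p))
    (trans : ∀ {x y z : X} (p : Path.Homotopic.Quotient x y) (q : Path.Homotopic.Quotient y z),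
      P p → P q → P (p.trans q))
    {x y : X} (p : Path x y) : P (.mk p) := by
  obtain ⟨t, ht0, ht_mono, ⟨n, hn⟩, ht⟩ :=
    exists_monotone_Icc_subset_open_cover_unitInterval (fun i => (hU i).preimage p.continuous)
      (by rw [← preimage_iUnion, hcover, preimage_univ])
  have initial (k : ℕ) : P (.mk (p.subpath (t 0) (t k))) := by
    induction k with
    | zero =>
      obtain ⟨i, hi⟩ := mem_iUnion.1 (hcover ▸ mem_univ (p (t 0)))
      exact small i _ fun s => by simpa using hi
    | succ k ih =>
      obtain ⟨i, hi⟩ := ht k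
      have step : P (.mk (p.subpath (t k) (t (k + 1)))) := small i _ fun s => by
        obtain ⟨u, hu, hus⟩ :=
          p.range_subpath_of_le _ _ (ht_mono k.le_succ) ▸ mem_range_self (f := p.subpath _ _) s
        exact hus ▸ hi hu
      have split := Path.Homotopic.Quotient.eq.2
        ⟨Path.Homotopy.subpathTransSubpath p (t 0) (t k) (t (k + 1))⟩
      rw [← split, Path.Homotopic.Quotient.mk_trans]
      exact trans _ _ ih step
  have cast_iff {a b : X} (ha : a = x) (hb : b = y) : P (.mk (p.cast ha hb)) ↔ P (.mk p) := by
    subst ha hb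
    rfl
  have whole := initial n
  rwa [ht0, hn n le_rfl, Path.subpath_zero_one, cast_iff] at whole

theorem exists_homotopicQuotient_unique_in_cover (hcover : ⋃ i, U i = univ)
    (hsc : ∀ i, IsSimplyConnected (U i)) (hinter : ∀ i j, IsPathConnected (U i ∩ U j)) {x₀ : X}
    (hx₀ : ∀ i, x₀ ∈ U i) :
    ∃ c : ∀ x, Path.Homotopic.Quotient x₀ x,
      ∀ (i : ι) (x : X) (p : Path x₀ x), (∀ t, p t ∈ U i) → Path.Homotopic.Quotient.mk p = c x := by
  have exists_path (x : X) : ∃ (i : ι) (c : Path x₀ x), ∀ t, c t ∈ U i := by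
    obtain ⟨i, hi⟩ := mem_iUnion.1 (hcover ▸ mem_univ x)
    exact ⟨i, (hsc i).isPathConnected.joinedIn x₀ (hx₀ i) x hi⟩
  choose i c hc using exists_path
  refine ⟨fun x => .mk (c x), fun j x p hp => ?_⟩
  obtain ⟨r, hr⟩ := (hinter (i x) j).joinedIn x₀ ⟨hx₀ _, hx₀ _⟩ x
    ⟨by simpa using hc x 1, by simpa using hp 1⟩
  calc
    Path.Homotopic.Quotient.mk p = .mk r :=
      homotopicQuotient_mk_eq_of_isSimplyConnected (hsc j) hp fun t => (hr t).2
    _ = .mk (c x) :=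
      homotopicQuotient_mk_eq_of_isSimplyConnected (hsc (i x)) (fun t => (hr t).1) (hc x)

theorem simplyConnectedSpace_of_isOpen_cover (hU : ∀ i, IsOpen (U i)) (hcover : ⋃ i, U i = univ)
    (hsc : ∀ i, IsSimplyConnected (U i)) (hinter : ∀ i j, IsPathConnected (U i ∩ U j)) {x₀ : X}
    (hx₀ : ∀ i, x₀ ∈ U i) : SimplyConnectedSpace X := by
  obtain ⟨c, hc⟩ := exists_homotopicQuotient_unique_in_cover hcover hsc hinter hx₀
  have trans_eq {x y : X} (p : Path x y) : (c x).trans (.mk p) = c y := by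
    refine homotopicQuotient_induction_of_isOpen_cover hU hcover
      (P := fun {x y} p => (c x).trans p = c y) (fun i x y p hp => ?_) (fun p q hp hq => ?_) p
    · obtain ⟨r, hr⟩ := (hsc i).isPathConnected.joinedIn x₀ (hx₀ i) x (by simpa using hp 0)
      rw [← hc i x r hr, ← Path.Homotopic.Quotient.mk_trans]
      refine hc i y _ fun t => ?_
      rw [Path.trans_apply]
      split_ifs
      exacts [hr _, hp _]
    · rw [← Path.Homotopic.Quotient.trans_assoc, hp, hq]
  rw [simply_connected_iff_paths_homotopic']
  refine ⟨⟨⟨x₀⟩, fun x y => ?_⟩, fun {x y} p q => ?_⟩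
  · exact ⟨(c x).out.symm.trans (c y).out⟩
  · rw [← Path.Homotopic.Quotient.eq]
    have := congrArg ((c x).symm.trans ·) ((trans_eq p).trans (trans_eq q).symm)
    simpa [← Path.Homotopic.Quotient.trans_assoc] using this

theorem simplyConnectedSpace_of_isOpen_union {U V : Set X} (hU : IsOpen U) (hV : IsOpen V)
    (hcover : U ∪ V = univ) (hUsc : IsSimplyConnected U) (hVsc : IsSimplyConnected V)
    (hinter : IsPathConnected (U ∩ V)) : SimplyConnectedSpace X := by
  obtain ⟨x₀, hx₀U, hx₀V⟩ := hinter.nonempty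
  refine simplyConnectedSpace_of_isOpen_cover (U := fun b : Bool => cond b U V) (x₀ := x₀)
    (Bool.forall_bool.2 ⟨hV, hU⟩) (by rw [← union_eq_iUnion, hcover])
    (Bool.forall_bool.2 ⟨hVsc, hUsc⟩) ?_ (Bool.forall_bool.2 ⟨hx₀V, hx₀U⟩)
  rintro (_ | _) (_ | _)
  · simpa using hVsc.isPathConnected
  · simpa [inter_comm] using hinter
  · simpa using hinter
  · simpa using hUsc.isPathConnected

end SeifertVanKampen

section Sphere

open Metric Set

variable {E : Type*} [NormedAddCommGroup E] [InnerProductSpace ℝ E]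

theorem rank_le_rank_orthogonal_span_singleton_add_one (v : E) :
    Module.rank ℝ E ≤ Module.rank ℝ (ℝ ∙ v)ᗮ + 1 :=
  calc
    Module.rank ℝ E = Module.rank ℝ ↥((ℝ ∙ v)ᗮ ⊔ ℝ ∙ v) := by
      rw [sup_comm, Submodule.sup_orthogonal_of_hasOrthogonalProjection, rank_top]
    _ ≤ Module.rank ℝ (ℝ ∙ v)ᗮ + Module.rank ℝ (ℝ ∙ v) :=
      Submodule.rank_add_le_rank_add_rank _ _
    _ ≤ Module.rank ℝ (ℝ ∙ v)ᗮ + 1 := by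
      gcongr
      exact (rank_span_le _).trans_eq (Cardinal.mk_singleton v)

theorem one_lt_rank_orthogonal_span_singleton (hE : 2 < Module.rank ℝ E) (v : E) :
    1 < Module.rank ℝ (ℝ ∙ v)ᗮ := by
  by_contra! h
  refine hE.not_ge ((rank_le_rank_orthogonal_span_singleton_add_one v).trans ?_)
  exact (add_le_add_left h 1).trans_eq one_add_one_eq_two

instance contractibleSpace_compl_singleton_sphere (v : sphere (0 : E) 1) :
    ContractibleSpace ({v}ᶜ : Set (sphere (0 : E) 1)) := by
  have hv : ‖(v : E)‖ = 1 := norm_eq_of_mem_sphere v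
  have homeo := (stereographic hv).toHomeomorphSourceTarget
  rw [stereographic_source, stereographic_target] at homeo
  exact (homeo.trans (Homeomorph.Set.univ _)).contractibleSpace

theorem isPathConnected_compl_of_countable_sphere (hE : 2 < Module.rank ℝ E)
    {s : Set (sphere (0 : E) 1)} (hs : s.Countable) : IsPathConnected sᶜ := by
  obtain rfl | ⟨v, hv⟩ := s.eq_empty_or_nonempty
  · have hE' : 1 < Module.rank ℝ E := Cardinal.one_lt_two.trans hE
    rw [compl_empty, ← pathConnectedSpace_iff_univ, ← isPathConnected_iff_pathConnectedSpace]
    exact isPathConnected_sphere hE' 0 zero_le_one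
  · have hv1 : ‖(v : E)‖ = 1 := norm_eq_of_mem_sphere v
    let σ := (stereographic hv1).symm
    have hσ : IsPathConnected (σ ⁻¹' s)ᶜ :=
      (hs.preimage_of_injOn (isOpenEmbedding_stereographic_symm hv1).injective.injOn
        ).isPathConnected_compl_of_one_lt_rank (one_lt_rank_orthogonal_span_singleton hE v)
    have image_eq : σ '' (σ ⁻¹' s)ᶜ = sᶜ := by
      rw [← preimage_compl, image_preimage_eq_inter_range,
        range_stereographic_symm hv1 v.2]
      exact inter_eq_left.2 (compl_subset_compl.2 (singleton_subset_iff.2 hv))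
    exact image_eq ▸ hσ.image (isOpenEmbedding_stereographic_symm hv1).continuous

end Sphere

section CosetFibration

open Metric Set

variable {G X : Type*} [Group G] [TopologicalSpace G] [IsTopologicalGroup G] [TopologicalSpace X]
  {H : Subgroup G} {p : G → X} {W : Set X}

/-- The trivialization, over a set `W` carrying a continuous section `s`, of a continuous map `p`
on a topological group whose fibres are the left cosets of `H`. -/
def preimageHomeomorphProd (hp : Continuous p) (hfib : ∀ g h, p g = p h ↔ g⁻¹ * h ∈ H)
    (s : C(W, G)) (hs : ∀ x, p (s x) = x) : p ⁻¹' W ≃ₜ W × H where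
  toFun g := (⟨p g, g.2⟩, ⟨(s ⟨p g, g.2⟩)⁻¹ * g, (hfib _ _).1 (hs _)⟩)
  invFun y := ⟨s y.1 * y.2, by
    have same_fibre : p (s y.1) = p (s y.1 * y.2) := (hfib _ _).2 (by simp)
    rw [mem_preimage, ← same_fibre, hs]
    exact y.1.2⟩
  left_inv g := by simp
  right_inv y := by
    have proj_eq : p (s y.1 * y.2) = y.1 := ((hfib _ _).2 (by simp)).symm.trans (hs y.1)
    ext <;> simp [proj_eq]
  continuous_toFun := by fun_prop
  continuous_invFun := by fun_prop

theorem isSimplyConnected_preimage_of_section [SimplyConnectedSpace H] [ContractibleSpace W]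
    (hp : Continuous p) (hfib : ∀ g h, p g = p h ↔ g⁻¹ * h ∈ H)
    (s : C(W, G)) (hs : ∀ x, p (s x) = x) : IsSimplyConnected (p ⁻¹' W) := by
  let contract : ContinuousMap.HomotopyEquiv (W × H) (Unit × H) :=
    (ContractibleSpace.hequiv W Unit).some.prodCongr (.refl H)
  exact (((preimageHomeomorphProd hp hfib s hs).toHomotopyEquiv.trans contract).trans
    (Homeomorph.punitProd H).toHomotopyEquiv).simplyConnectedSpace

theorem isPathConnected_preimage_of_section [PathConnectedSpace H] (hW : IsPathConnected W)
    (hp : Continuous p) (hfib : ∀ g h, p g = p h ↔ g⁻¹ * h ∈ H)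
    (s : C(W, G)) (hs : ∀ x, p (s x) = x) : IsPathConnected (p ⁻¹' W) := by
  have := isPathConnected_iff_pathConnectedSpace.1 hW
  let e := preimageHomeomorphProd hp hfib s hs
  exact isPathConnected_iff_pathConnectedSpace.2
    (e.symm.surjective.pathConnectedSpace e.symm.continuous)

theorem simplyConnectedSpace_of_section_sphere {E : Type*} [NormedAddCommGroup E]
    [InnerProductSpace ℝ E] (hE : 2 < Module.rank ℝ E) [SimplyConnectedSpace H]
    {p : G → sphere (0 : E) 1} (hp : Continuous p) (hfib : ∀ g h, p g = p h ↔ g⁻¹ * h ∈ H)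
    (s : C(({p 1}ᶜ : Set (sphere (0 : E) 1)), G)) (hs : ∀ x, p (s x) = x) :
    SimplyConnectedSpace G := by
  let U : Set G := p ⁻¹' {p 1}ᶜ
  let V : Set G := p ⁻¹' {-p 1}ᶜ
  have hU : IsSimplyConnected U := isSimplyConnected_preimage_of_section hp hfib s hs
  have hV : IsSimplyConnected V := by
    let k : G := s ⟨-p 1, (ne_neg_of_mem_unit_sphere ℝ (p 1)).symm⟩
    have hk : p k = -p 1 := hs _
    have V_eq : V = Homeomorph.mulLeft k⁻¹ ⁻¹' U := by
      ext g
      have : p (k⁻¹ * g) = p 1 ↔ p g = -p 1 := by rw [hfib, ← hk, hfib]; simp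
      simp [U, V, this]
    rw [V_eq]
    exact (Homeomorph.mulLeft k⁻¹).isSimplyConnected_preimage.2 hU
  have hUV : IsPathConnected (U ∩ V) := by
    have hsub : {p 1, -p 1}ᶜ ⊆ ({p 1}ᶜ : Set (sphere (0 : E) 1)) := by simp
    rw [← preimage_inter, ← compl_union, singleton_union]
    exact isPathConnected_preimage_of_section
      (isPathConnected_compl_of_countable_sphere hE (toFinite _).countable) hp hfib
      (s.comp ⟨inclusion hsub, continuous_inclusion hsub⟩) fun x => hs _
  have hcover : U ∪ V = univ := by
    rw [← preimage_union, ← compl_inter, singleton_inter_eq_empty.2, compl_empty, preimage_univ]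
    exact ne_neg_of_mem_unit_sphere ℝ (p 1)
  have hUo : IsOpen U := isOpen_compl_singleton.preimage hp
  have hVo : IsOpen V := isOpen_compl_singleton.preimage hp
  exact simplyConnectedSpace_of_isOpen_union hUo hVo hcover hU hV hUV

end CosetFibration

section UnitaryMatrix

open Matrix

theorem norm_toLp_eq_one_iff_dotProduct_star {ι 𝕜 : Type*} [Fintype ι] [RCLike 𝕜] (x : ι → 𝕜) :
    ‖WithLp.toLp 2 x‖ = 1 ↔ x ⬝ᵥ star x = 1 := by
  have inner_eq := EuclideanSpace.inner_eq_star_dotProduct (WithLp.toLp 2 x) (WithLp.toLp 2 x)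
  rw [inner_self_eq_norm_sq_to_K] at inner_eq
  rw [← inner_eq, ← pow_eq_one_iff_of_nonneg (norm_nonneg _) two_ne_zero]
  norm_cast

variable {ι R : Type*} [Fintype ι] [DecidableEq ι]

theorem col_mul_diagonal_mulSingle [Semiring R] {i j : ι} (hij : i ≠ j) (A : Matrix ι ι R)
    (c : R) :
    (A * diagonal (Pi.mulSingle j c)).col i = A.col i := by
  ext k
  simp [mul_diagonal, hij]

section CommRing

variable [CommRing R] [StarRing R]

theorem col_dotProduct_star_col_of_mem_unitaryGroup {A : Matrix ι ι R}
    (hA : A ∈ unitaryGroup ι R) (i : ι) : A.col i ⬝ᵥ star (A.col i) = 1 := by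
  have entry := congrFun₂ (mem_unitaryGroup_iff'.1 hA) i i
  rwa [one_apply_eq, mul_apply', dotProduct_comm] at entry

theorem diagonal_mem_unitaryGroup {d : ι → R} (hd : ∀ i, d i ∈ unitary R) :
    diagonal d ∈ unitaryGroup ι R := by
  rw [mem_unitaryGroup_iff, star_eq_conjTranspose, diagonal_conjTranspose, diagonal_mul_diagonal,
    ← diagonal_one]
  exact congrArg diagonal (funext fun i => Unitary.mul_star_self_of_mem (hd i))

theorem mul_diagonal_mulSingle_star_det_mem_specialUnitaryGroup {A : Matrix ι ι R}
    (hA : A ∈ unitaryGroup ι R) (j : ι) :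
    A * diagonal (Pi.mulSingle j (star A.det)) ∈ specialUnitaryGroup ι R := by
  have hdet : A.det ∈ unitary R := det_of_mem_unitary hA
  refine mem_specialUnitaryGroup_iff.2 ⟨mul_mem hA (diagonal_mem_unitaryGroup fun i => ?_), ?_⟩
  · obtain rfl | hij := eq_or_ne i j
    · simpa using Unitary.star_mem hdet
    · simp [hij, one_mem]
  · rw [det_mul, det_diagonal, Fintype.prod_pi_mulSingle', Unitary.mul_star_self_of_mem hdet]

theorem one_sub_smul_vecMulVec_star_mem_unitaryGroup {c : R} {u : ι → R}
    (hc : c + star c = c * star c * (u ⬝ᵥ star u)) :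
    1 - c • vecMulVec u (star u) ∈ unitaryGroup ι R := by
  have hsq : vecMulVec u (star u) * vecMulVec u (star u) =
      (u ⬝ᵥ star u) • vecMulVec u (star u) := by
    rw [vecMulVec_mul_vecMulVec, vecMulVec_smul, dotProduct_comm]
  have hstar : star (vecMulVec u (star u)) = vecMulVec u (star u) := by
    rw [star_eq_conjTranspose, conjTranspose_vecMulVec, star_star]
  rw [mem_unitaryGroup_iff, star_sub, star_one, star_smul, hstar]
  generalize vecMulVec u (star u) = M at hsq
  calc (1 - c • M) * (1 - star c • M)
      = 1 - (c + star c) • M + (c * star c) • (M * M) := by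
        simp only [sub_mul, mul_sub, one_mul, mul_one, smul_mul_smul_comm, add_smul]
        abel
    _ = 1 := by rw [hsq, smul_smul, ← hc, sub_add_cancel]

end CommRing

section Field

variable {𝕜 : Type*} [Field 𝕜] [StarRing 𝕜]

/-- The complex reflection with root `v - x` that carries the unit vector `v` to the unit vector
`x`, where the vectors are distinct in the strong sense `v ⬝ᵥ star x ≠ 1`. -/
def complexReflection (v x : ι → 𝕜) : Matrix ι ι 𝕜 :=
  1 - (1 - v ⬝ᵥ star x)⁻¹ • vecMulVec (v - x) (star (v - x))

theorem complexReflection_mem_unitaryGroup {v x : ι → 𝕜} (hv : v ⬝ᵥ star v = 1)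
    (hx : x ⬝ᵥ star x = 1) (hvx : v ⬝ᵥ star x ≠ 1) :
    complexReflection v x ∈ unitaryGroup ι 𝕜 := by
  set a := 1 - v ⬝ᵥ star x with ha_def
  have ha : a ≠ 0 := sub_ne_zero.2 hvx.symm
  have ha' : star a ≠ 0 := star_ne_zero.2 ha
  have hroot : (v - x) ⬝ᵥ star (v - x) = a + star a := by
    have : star (v ⬝ᵥ star x) = x ⬝ᵥ star v := (dotProduct_star x v).symm
    rw [star_sub, sub_dotProduct, dotProduct_sub, dotProduct_sub, hv, hx, ha_def, star_sub,
      star_one, this]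
    ring
  refine one_sub_smul_vecMulVec_star_mem_unitaryGroup ?_
  rw [hroot, ← ha_def, star_inv₀]
  field_simp
  ring

theorem complexReflection_mulVec {v x : ι → 𝕜} (hv : v ⬝ᵥ star v = 1)
    (hvx : v ⬝ᵥ star x ≠ 1) : complexReflection v x *ᵥ v = x := by
  have hroot : star (v - x) ⬝ᵥ v = 1 - v ⬝ᵥ star x := by
    rw [dotProduct_comm, star_sub, dotProduct_sub, hv]
  rw [complexReflection, sub_mulVec, one_mulVec, smul_mulVec, vecMulVec_mulVec, hroot,
    op_smul_eq_smul, inv_smul_smul₀ (sub_ne_zero.2 hvx.symm), sub_sub_cancel]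

theorem continuous_complexReflection {A : Type*} [TopologicalSpace A] [TopologicalSpace 𝕜]
    [IsTopologicalDivisionRing 𝕜] [ContinuousStar 𝕜] (v : ι → 𝕜) {f : A → ι → 𝕜}
    (hf : Continuous f) (hvf : ∀ a, v ⬝ᵥ star (f a) ≠ 1) :
    Continuous fun a => complexReflection v (f a) := by
  have hden : Continuous fun a => (1 - v ⬝ᵥ star (f a))⁻¹ :=
    (continuous_const.sub (continuous_const.dotProduct hf.star)).inv₀
      fun a => sub_ne_zero.2 (hvf a).symm
  have hroot : Continuous fun a => v - f a := continuous_const.sub hf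
  exact continuous_const.sub (hden.smul (hroot.matrix_vecMulVec hroot.star))

end Field

end UnitaryMatrix

section SpecialUnitaryGroup

open Matrix Metric Set Sum

variable {ι κ R : Type*} [Fintype ι] [DecidableEq ι] [Fintype κ] [DecidableEq κ]

section Ring

variable [CommRing R] [StarRing R]

instance [TopologicalSpace R] [ContinuousStar R] : ContinuousInv (specialUnitaryGroup ι R) where
  continuous_inv := (continuous_star.comp continuous_subtype_val).subtype_mk _

instance [TopologicalSpace R] [IsTopologicalRing R] [ContinuousStar R] :
    IsTopologicalGroup (specialUnitaryGroup ι R) where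

instance [Subsingleton ι] : Subsingleton (specialUnitaryGroup ι R) := by
  refine ⟨fun A B => Subtype.ext (Matrix.ext fun i j => ?_)⟩
  have : Unique ι := uniqueOfSubsingleton i
  have entry (C : specialUnitaryGroup ι R) : C.1 i j = 1 := by
    rw [Subsingleton.elim i default, Subsingleton.elim j default, ← det_unique C.1]
    exact C.2.2
  rw [entry, entry]

theorem submatrix_equiv_mem_specialUnitaryGroup_iff (e : κ ≃ ι) {A : Matrix ι ι R} :
    A.submatrix e e ∈ specialUnitaryGroup κ R ↔ A ∈ specialUnitaryGroup ι R := by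
  have submatrix_inj : Function.Injective fun B : Matrix ι ι R => B.submatrix e e :=
    (reindex e.symm e.symm).injective
  rw [mem_specialUnitaryGroup_iff, mem_specialUnitaryGroup_iff, mem_unitaryGroup_iff,
    mem_unitaryGroup_iff, star_eq_conjTranspose, conjTranspose_submatrix, submatrix_mul_equiv,
    det_submatrix_equiv_self, ← submatrix_one_equiv e, star_eq_conjTranspose]
  exact and_congr_left' submatrix_inj.eq_iff

/-- Relabelling of rows and columns along `e`. -/
def specialUnitaryGroupReindex [TopologicalSpace R] (e : ι ≃ κ) :
    specialUnitaryGroup ι R ≃ₜ specialUnitaryGroup κ R where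
  toFun A := ⟨A.1.submatrix e.symm e.symm, (submatrix_equiv_mem_specialUnitaryGroup_iff _).2 A.2⟩
  invFun A := ⟨A.1.submatrix e e, (submatrix_equiv_mem_specialUnitaryGroup_iff _).2 A.2⟩
  left_inv A := by simp
  right_inv A := by simp
  continuous_toFun := (continuous_subtype_val.matrix_submatrix _ _).subtype_mk _
  continuous_invFun := (continuous_subtype_val.matrix_submatrix _ _).subtype_mk _

theorem fromBlocks_one_mem_specialUnitaryGroup_iff {A : Matrix ι ι R} :
    fromBlocks A 0 0 (1 : Matrix κ κ R) ∈ specialUnitaryGroup (ι ⊕ κ) R ↔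
      A ∈ specialUnitaryGroup ι R := by
  simp [mem_specialUnitaryGroup_iff, mem_unitaryGroup_iff, star_eq_conjTranspose,
    fromBlocks_conjTranspose, fromBlocks_multiply, ← fromBlocks_one]

variable (ι κ R) in
/-- The inclusion of `SU(ι)` into `SU(ι ⊕ κ)` as block matrices acting trivially on the second
summand. -/
def specialUnitaryGroupInl : specialUnitaryGroup ι R →* specialUnitaryGroup (ι ⊕ κ) R where
  toFun A := ⟨fromBlocks A.1 0 0 1, fromBlocks_one_mem_specialUnitaryGroup_iff.2 A.2⟩
  map_one' := Subtype.ext fromBlocks_one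
  map_mul' A B := Subtype.ext (by simp [fromBlocks_multiply])

theorem isEmbedding_specialUnitaryGroupInl [TopologicalSpace R] :
    Topology.IsEmbedding (specialUnitaryGroupInl ι κ R) := by
  have hcont : Continuous (specialUnitaryGroupInl ι κ R) :=
    (continuous_subtype_val.matrix_fromBlocks continuous_const continuous_const
      continuous_const).subtype_mk _
  have hcorner : Continuous fun A : specialUnitaryGroup (ι ⊕ κ) R => A.1.toBlocks₁₁ :=
    continuous_subtype_val.matrix_submatrix inl inl
  refine .of_comp hcont hcorner ?_
  exact .subtypeVal

theorem star_mul_col_eq_single_iff {A B : Matrix ι ι R} (hA : A ∈ unitaryGroup ι R) {i : ι} :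
    (star A * B).col i = Pi.single i 1 ↔ A.col i = B.col i := by
  rw [← mulVec_single_one, ← mulVec_single_one, ← mulVec_single_one, ← mulVec_mulVec]
  constructor <;> intro h
  · rw [← h, mulVec_mulVec, mem_unitaryGroup_iff.1 hA, one_mulVec, h]
  · rw [← h, mulVec_mulVec, mem_unitaryGroup_iff'.1 hA, one_mulVec]

theorem row_eq_single_of_col_eq_single {A : Matrix ι ι R} (hA : A ∈ unitaryGroup ι R) {i : ι}
    (hcol : A.col i = Pi.single i 1) : A.row i = Pi.single i 1 := by
  have star_col : (star A).col i = Pi.single i 1 := by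
    rw [← mul_one (star A), star_mul_col_eq_single_iff hA, hcol, ← mulVec_single_one, one_mulVec]
  ext j
  have entry := congrArg star (congrFun star_col j)
  obtain rfl | hij := eq_or_ne j i
  · simpa using entry
  · simpa [hij] using entry

theorem mem_range_specialUnitaryGroupInl_iff {A : specialUnitaryGroup (ι ⊕ Unit) R} :
    A ∈ (specialUnitaryGroupInl ι Unit R).range ↔
      A.1.col (inr ()) = Pi.single (inr ()) 1 := by
  constructor
  · rintro ⟨B, rfl⟩
    ext (k | k) <;> simp [specialUnitaryGroupInl]
  · intro hcol
    have hrow := row_eq_single_of_col_eq_single A.2.1 hcol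
    have block_eq : fromBlocks A.1.toBlocks₁₁ 0 0 1 = A.1 := by
      ext (k | k) (l | l)
      · rfl
      · simpa using (congrFun hcol (inl k)).symm
      · simpa using (congrFun hrow (inl l)).symm
      · simpa using (congrFun hcol (inr k)).symm
    exact ⟨⟨A.1.toBlocks₁₁, fromBlocks_one_mem_specialUnitaryGroup_iff.1 (block_eq ▸ A.2)⟩,
      Subtype.ext block_eq⟩

end Ring

section RCLike

variable {𝕜 : Type*} [RCLike 𝕜]

variable (𝕜) in
/-- The orbit map `A ↦ A eᵢ` of the action of the special unitary group on the unit sphere. -/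
def sphereCol (i : ι) (A : specialUnitaryGroup ι 𝕜) : sphere (0 : EuclideanSpace 𝕜 ι) 1 :=
  ⟨WithLp.toLp 2 (A.1.col i), mem_sphere_zero_iff_norm.2 <|
    (norm_toLp_eq_one_iff_dotProduct_star _).2
      (col_dotProduct_star_col_of_mem_unitaryGroup A.2.1 i)⟩

theorem sphereCol_eq_iff {i : ι} {A : specialUnitaryGroup ι 𝕜}
    {x : sphere (0 : EuclideanSpace 𝕜 ι) 1} :
    sphereCol 𝕜 i A = x ↔ A.1.col i = WithLp.ofLp x.1 := by
  rw [Subtype.ext_iff, ← (WithLp.ofLp_injective 2).eq_iff]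
  rfl

theorem continuous_sphereCol (i : ι) : Continuous (sphereCol 𝕜 i) :=
  ((PiLp.continuous_toLp 2 _).comp (continuous_pi fun j =>
    continuous_subtype_val.matrix_elem j i)).subtype_mk _

theorem sphereCol_eq_sphereCol_iff {A B : specialUnitaryGroup (ι ⊕ Unit) 𝕜} :
    sphereCol 𝕜 (inr ()) A = sphereCol 𝕜 (inr ()) B ↔
      A⁻¹ * B ∈ (specialUnitaryGroupInl ι Unit 𝕜).range :=
  sphereCol_eq_iff.trans <| (star_mul_col_eq_single_iff A.2.1).symm.trans
    (mem_range_specialUnitaryGroupInl_iff (A := A⁻¹ * B)).symm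

theorem exists_section_sphereCol {i j : ι} (hij : i ≠ j) :
    ∃ s : C(({sphereCol 𝕜 i 1}ᶜ : Set (sphere (0 : EuclideanSpace 𝕜 ι) 1)),
      specialUnitaryGroup ι 𝕜), ∀ x, sphereCol 𝕜 i (s x) = x := by
  let W : Set (sphere (0 : EuclideanSpace 𝕜 ι) 1) := {sphereCol 𝕜 i 1}ᶜ
  let v : ι → 𝕜 := Pi.single i 1
  let f : W → ι → 𝕜 := fun x => WithLp.ofLp x.1.1
  have hf : Continuous f := by fun_prop
  have hv : v ⬝ᵥ star v = 1 := by simp [v]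
  have f_unit (x : W) : f x ⬝ᵥ star (f x) = 1 :=
    (norm_toLp_eq_one_iff_dotProduct_star _).1 (norm_eq_of_mem_sphere x.1)
  have hvf (x : W) : v ⬝ᵥ star (f x) ≠ 1 := by
    intro h
    refine x.2 (sphereCol_eq_iff.2 ?_).symm
    have inner_eq : inner 𝕜 x.1.1 (WithLp.toLp 2 v) = 1 :=
      (EuclideanSpace.inner_eq_star_dotProduct _ _).trans h
    rw [inner_eq_one_iff_of_norm_eq_one (norm_eq_of_mem_sphere x.1)
      ((norm_toLp_eq_one_iff_dotProduct_star v).2 hv)] at inner_eq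
    rw [inner_eq, ← mulVec_single_one]
    exact one_mulVec _
  let B (x : W) := complexReflection v (f x)
  have hB : Continuous B := continuous_complexReflection v hf hvf
  refine ⟨⟨fun x => ⟨_, mul_diagonal_mulSingle_star_det_mem_specialUnitaryGroup
    (complexReflection_mem_unitaryGroup hv (f_unit x) (hvf x)) j⟩, ?_⟩, fun x => ?_⟩
  · refine Continuous.subtype_mk ?_ _
    exact hB.matrix_mul ((continuous_mulSingle j).comp hB.matrix_det.star).matrix_diagonal
  · refine sphereCol_eq_iff.2 ((col_mul_diagonal_mulSingle hij _ _).trans ?_)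
    rw [← mulVec_single_one]
    exact complexReflection_mulVec hv (hvf x)

theorem simplyConnectedSpace_specialUnitaryGroup_sum_unit [Nonempty ι]
    (hrank : 2 < Module.rank ℝ (EuclideanSpace 𝕜 (ι ⊕ Unit)))
    [SimplyConnectedSpace (specialUnitaryGroup ι 𝕜)] :
    SimplyConnectedSpace (specialUnitaryGroup (ι ⊕ Unit) 𝕜) := by
  have : SimplyConnectedSpace (specialUnitaryGroupInl ι Unit 𝕜).range :=
    isEmbedding_specialUnitaryGroupInl.toHomeomorph.symm.toHomotopyEquiv.simplyConnectedSpace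
  obtain ⟨k⟩ := ‹Nonempty ι›
  obtain ⟨s, hs⟩ := exists_section_sphereCol (𝕜 := 𝕜) (inr_ne_inl : inr () ≠ inl k)
  exact simplyConnectedSpace_of_section_sphere hrank (continuous_sphereCol _)
    (fun _ _ => sphereCol_eq_sphereCol_iff) s hs

end RCLike

theorem two_lt_rank_euclideanSpace {ι : Type*} [Fintype ι] (hι : 1 < Fintype.card ι) :
    2 < Module.rank ℝ (EuclideanSpace ℂ ι) := by
  rw [← Module.finrank_eq_rank, finrank_real_of_complex, finrank_euclideanSpace]
  norm_cast
  omega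

instance simplyConnectedSpace_specialUnitaryGroup (ι : Type*) [Fintype ι] [DecidableEq ι] :
    SimplyConnectedSpace (specialUnitaryGroup ι ℂ) := by
  suffices ∀ [Fintype ι] [DecidableEq ι], SimplyConnectedSpace (specialUnitaryGroup ι ℂ) from this
  induction ι using Finite.induction_empty_option with
  | of_equiv e ih =>
    intro _ _
    classical
    have := Fintype.ofEquiv _ e.symm
    exact (specialUnitaryGroupReindex e.symm).toHomotopyEquiv.simplyConnectedSpace
  | h_empty => exact SimplyConnectedSpace.ofContractible _
  | @h_option α _ ih =>
    intro _ _
    classical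
    obtain _ | _ := isEmpty_or_nonempty α
    · exact SimplyConnectedSpace.ofContractible _
    · have := simplyConnectedSpace_specialUnitaryGroup_sum_unit (ι := α) (𝕜 := ℂ)
        (two_lt_rank_euclideanSpace (by simp [Fintype.card_pos]))
      let e := specialUnitaryGroupReindex (R := ℂ) (Equiv.optionEquivSumPUnit α)
      exact e.toHomotopyEquiv.simplyConnectedSpace

end SpecialUnitaryGroup

section Center

open Matrix

theorem mem_unitary_of_norm_eq_one {𝕜 : Type*} [RCLike 𝕜] {c : 𝕜} (hc : ‖c‖ = 1) :
    c ∈ unitary 𝕜 := by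
  rw [Unitary.mem_iff_self_mul_star, RCLike.star_def, RCLike.mul_conj, hc, RCLike.ofReal_one,
    one_pow]

variable {ι : Type*} [Fintype ι] [DecidableEq ι]

theorem scalar_mem_specialUnitaryGroup_iff [Nonempty ι] {c : ℂ} :
    scalar ι c ∈ specialUnitaryGroup ι ℂ ↔ c ^ Fintype.card ι = 1 := by
  have det_scalar : (scalar ι c).det = c ^ Fintype.card ι := by simp
  rw [mem_specialUnitaryGroup_iff, det_scalar, and_iff_right_iff_imp]
  exact fun hc => diagonal_mem_unitaryGroup fun _ => mem_unitary_of_norm_eq_one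
    (Complex.norm_eq_one_of_pow_eq_one hc Fintype.card_ne_zero)

theorem exists_smul_eq_of_mem_unitaryGroup [Nonempty ι] {A : Matrix ι ι ℂ}
    (hA : A ∈ unitaryGroup ι ℂ) : ∃ c : ℂ, ∃ B ∈ specialUnitaryGroup ι ℂ, c • B = A := by
  have hdet : ‖A.det‖ = 1 := CStarRing.norm_of_mem_unitary (det_of_mem_unitary hA)
  obtain ⟨c, hc⟩ := IsAlgClosed.exists_pow_nat_eq A.det (Fintype.card_pos (α := ι))
  have hc1 : ‖c‖ = 1 := by
    rwa [← hc, norm_pow, pow_eq_one_iff_of_nonneg (norm_nonneg c) Fintype.card_ne_zero] at hdet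
  have hc0 : c ≠ 0 := norm_ne_zero_iff.1 (hc1 ▸ one_ne_zero)
  have hc' : c⁻¹ ∈ unitary ℂ := mem_unitary_of_norm_eq_one (by rw [norm_inv, hc1, inv_one])
  refine ⟨c, c⁻¹ • A, mem_specialUnitaryGroup_iff.2 ⟨Unitary.smul_mem_of_mem hc' hA, ?_⟩,
    smul_inv_smul₀ hc0 A⟩
  rw [det_smul, inv_pow, hc, inv_mul_cancel₀ (norm_ne_zero_iff.1 (hdet ▸ one_ne_zero))]

open scoped Matrix.Norms.L2Operator in
theorem span_specialUnitaryGroup :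
    Submodule.span ℂ (specialUnitaryGroup ι ℂ : Set (Matrix ι ι ℂ)) = ⊤ := by
  obtain _ | _ := isEmpty_or_nonempty ι
  · exact Subsingleton.elim _ _
  · rw [eq_top_iff, ← CStarAlgebra.span_unitary (Matrix ι ι ℂ), Submodule.span_le]
    intro A hA
    obtain ⟨c, B, hB, rfl⟩ := exists_smul_eq_of_mem_unitaryGroup hA
    exact Submodule.smul_mem _ c (Submodule.subset_span hB)

theorem mem_center_specialUnitaryGroup_iff {A : specialUnitaryGroup ι ℂ} :
    A ∈ Subgroup.center (specialUnitaryGroup ι ℂ) ↔ ∃ c : ℂ, scalar ι c = A.1 := by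
  refine ⟨fun hA => (mem_range_scalar_iff_commute_single' (M := A.1)).2 ?_, ?_⟩
  · have centralizes (M : Matrix ι ι ℂ) : Commute M A.1 := by
      have hM : M ∈ Submodule.span ℂ (specialUnitaryGroup ι ℂ : Set (Matrix ι ι ℂ)) :=
        span_specialUnitaryGroup (ι := ι) ▸ Submodule.mem_top
      induction hM using Submodule.span_induction with
      | mem B hB => exact congrArg Subtype.val (Subgroup.mem_center_iff.1 hA ⟨B, hB⟩)
      | zero => exact Commute.zero_left _
      | add B C _ _ ihB ihC => exact ihB.add_left ihC
      | smul c B _ ih => exact ih.smul_left c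
    exact fun _ _ => centralizes _
  · rintro ⟨c, hc⟩
    refine Subgroup.mem_center_iff.2 fun B => Subtype.ext ?_
    exact (hc ▸ scalar_commute c (Commute.all c) B.1 : Commute A.1 B.1).symm.eq

variable (ι) in
/-- The center of `SU(ι)` as the group of scalar matrices by roots of unity. -/
noncomputable def rootsOfUnityMulEquivCenter [Nonempty ι] :
    rootsOfUnity (Fintype.card ι) ℂ ≃* Subgroup.center (specialUnitaryGroup ι ℂ) :=
  let toCenter : rootsOfUnity (Fintype.card ι) ℂ →* Subgroup.center (specialUnitaryGroup ι ℂ) :=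
    { toFun ζ := ⟨⟨scalar ι ((ζ : ℂˣ) : ℂ),
          scalar_mem_specialUnitaryGroup_iff.2 ((mem_rootsOfUnity' _ _).1 ζ.2)⟩,
        mem_center_specialUnitaryGroup_iff.2 ⟨_, rfl⟩⟩
      map_one' := Subtype.ext (Subtype.ext (map_one (scalar ι)))
      map_mul' ζ ξ := Subtype.ext (Subtype.ext (map_mul (scalar ι) ((ζ : ℂˣ) : ℂ) ((ξ : ℂˣ) : ℂ))) }
  MulEquiv.ofBijective toCenter <| by
    constructor
    · intro ζ ξ h
      exact Subtype.ext (Units.ext (scalar_inj.1 (congrArg (fun A => (A.1 : Matrix ι ι ℂ)) h)))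
    · rintro ⟨A, hA⟩
      obtain ⟨c, hc⟩ := mem_center_specialUnitaryGroup_iff.1 hA
      exact ⟨rootsOfUnity.mkOfPowEq c (scalar_mem_specialUnitaryGroup_iff.1 (hc ▸ A.2)),
        Subtype.ext (Subtype.ext hc)⟩

end Center

section Covering

/-- The fundamental group of the quotient of a simply connected topological group by a discrete
normal subgroup, as the group of deck transformations of the quotient map. -/
noncomputable def fundamentalGroupQuotientMulEquiv {G : Type*} [Group G] [TopologicalSpace G]
    [IsTopologicalGroup G] [SimplyConnectedSpace G] (H : Subgroup G) (hH : IsDiscrete (H : Set G)) :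
    FundamentalGroup (G ⧸ H) (1 : G) ≃* H :=
  ((H.isQuotientCoveringMap hH).fundamentalGroupEquiv ⟨1, rfl⟩).trans
    { MulOpposite.opEquiv.symm.trans H.equivOp.symm with map_mul' := fun _ _ => rfl }

end Covering

section ProjectiveUnitaryGroup

open Matrix

/-- The identification of `SU n` with Mathlib's `Matrix.specialUnitaryGroup`, a submonoid of
matrices rather than a subgroup of the unitary group. -/
def SU.continuousMulEquiv (n : ℕ) : SU n ≃ₜ* specialUnitaryGroup (Fin n) ℂ where
  toFun A := ⟨A.1.1, A.1.2, A.2⟩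
  invFun A := ⟨⟨A.1, A.2.1⟩, A.2.2⟩
  map_mul' _ _ := rfl
  continuous_toFun := (continuous_subtype_val.comp continuous_subtype_val).subtype_mk _
  continuous_invFun := (continuous_subtype_val.subtype_mk _).subtype_mk _

instance SU.simplyConnectedSpace (n : ℕ) : SimplyConnectedSpace (SU n) :=
  (SU.continuousMulEquiv n).toHomeomorph.toHomotopyEquiv.simplyConnectedSpace

/-- The center of `SU n` is the group of `n`-th roots of unity. -/
noncomputable def SU.centerMulEquivRootsOfUnity (n : ℕ) [NeZero n] :
    Subgroup.center (SU n) ≃* rootsOfUnity n ℂ :=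
  (Subgroup.centerCongr (SU.continuousMulEquiv n).toMulEquiv).trans <|
    (rootsOfUnityMulEquivCenter (Fin n)).symm.trans <|
    .subgroupCongr (by rw [Fintype.card_fin])

end ProjectiveUnitaryGroup

/-- For every `n ≥ 1` the fundamental group of `PU(n)`, based at the identity coset,
is isomorphic to `ℤ/nℤ`. -/
theorem fundamentalGroup_PU (n : ℕ) (hn : 1 ≤ n) :
    Nonempty (FundamentalGroup (PU n) 1 ≃* Multiplicative (ZMod n)) := by
  have : NeZero n := ⟨Nat.one_le_iff_ne_zero.1 hn⟩
  let centerEquiv := SU.centerMulEquivRootsOfUnity n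
  have : Finite (Subgroup.center (SU n)) := .of_equiv _ centerEquiv.symm.toEquiv
  have hdisc : IsDiscrete (Subgroup.center (SU n) : Set (SU n)) := ⟨inferInstance⟩
  have hcard : Nat.card (rootsOfUnity n ℂ) = Nat.card (Multiplicative (ZMod n)) := by
    rw [Complex.card_rootsOfUnity, Nat.card_congr Multiplicative.toAdd, Nat.card_zmod]
  exact ⟨(fundamentalGroupQuotientMulEquiv _ hdisc).trans
    (centerEquiv.trans (mulEquivOfCyclicCardEq hcard))⟩
end
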